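/- arXiv:2209.10659 — 3 statements merged into one kernel-verified Lean document; each statement's English description precedes it below -/
import Mathlib

section
/- Let K = ℚ(√7). The natural map 𝒪_K^×/(𝒪_K^×)^8 → ∏_v K_v^×/(K_v^×)^8, where the product runs over all places v of K, is not injective: the unit u = 32257 + 12192√7 of 𝒪_K = ℤ[√7] is an 8th power in the completion K_v for every place v of K, but u is not an 8th power in K. -/
open IsDedekindDomain NumberField

section Setup

variable (K : Type*) [Field K] [NumberField K]

/-- The places of the number field `K`: the finite places (nonzero prime ideals of `𝒪_K`)
together with the infinite places. -/
def NFPlace := HeightOneSpectrum (𝓞 K) ⊕ InfinitePlace K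

/-- The completion of `K` at a place. -/
noncomputable def placeCompletion : NFPlace K → Type _
  | .inl v => v.adicCompletion K
  | .inr w => w.Completion

noncomputable instance (v : NFPlace K) : Field (placeCompletion K v) := by
  cases v with
  | inl v => exact inferInstanceAs (Field (v.adicCompletion K))
  | inr w => exact inferInstanceAs (Field w.Completion)

noncomputable instance (v : NFPlace K) : Algebra K (placeCompletion K v) := by
  cases v with
  | inl v => exact inferInstanceAs (Algebra K (v.adicCompletion K))
  | inr w => exact inferInstanceAs (Algebra K w.Completion)

/-- The natural map `𝒪_K^×/(𝒪_K^×)^8 → ∏_v K_v^×/(K_v^×)^8`, the product being over all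
places of `K`. -/
noncomputable def globalToLocalEighthPowers :
    ((𝓞 K)ˣ ⧸ (powMonoidHom 8 : (𝓞 K)ˣ →* (𝓞 K)ˣ).range) →*
      ∀ v : NFPlace K,
        (placeCompletion K v)ˣ ⧸
          (powMonoidHom 8 : (placeCompletion K v)ˣ →* (placeCompletion K v)ˣ).range :=
  QuotientGroup.lift
    (M := ∀ v : NFPlace K,
        (placeCompletion K v)ˣ ⧸
          (powMonoidHom 8 : (placeCompletion K v)ˣ →* (placeCompletion K v)ˣ).range) _
    (Pi.monoidHom fun v =>
      (QuotientGroup.mk' _).comp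
        ((Units.map (algebraMap K (placeCompletion K v)).toMonoidHom).comp
          (Units.map (algebraMap (𝓞 K) K).toMonoidHom)))
    (by
      rintro x ⟨u, rfl⟩
      rw [MonoidHom.mem_ker]
      ext v
      refine (QuotientGroup.eq_one_iff _).mpr ?_
      refine ⟨((Units.map (algebraMap K (placeCompletion K v)).toMonoidHom).comp
          (Units.map (algebraMap (𝓞 K) K).toMonoidHom)) u, ?_⟩
      rw [powMonoidHom_apply, powMonoidHom_apply, ← map_pow])

end Setup

open scoped NNReal in
theorem aux_quad {L : Type*} [NormedField L] [CompleteSpace L] [IsUltrametricDist L]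
    (c : L) (hc : ‖c‖ < 1) : ∃ t : L, t ^ 2 + t + c = 0 := by
  let f : L → L := fun t => -c - t ^ 2
  let s : Set L := Metric.closedBall 0 ‖c‖
  have hmaps : Set.MapsTo f s s := by
    intro t ht
    have ht : ‖t‖ ≤ ‖c‖ := by simpa [s] using ht
    have : ‖f t‖ ≤ ‖c‖ := by
      have h1 : ‖-c + -t ^ 2‖ ≤ max ‖-c‖ ‖-t ^ 2‖ := IsUltrametricDist.norm_add_le_max _ _
      have h2 : ‖-t ^ 2‖ ≤ ‖c‖ := by
        rw [norm_neg, norm_pow]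
        nlinarith [norm_nonneg t, norm_nonneg c]
      have h3 : f t = -c + -t ^ 2 := by simp only [f]; ring
      rw [h3]
      refine h1.trans (max_le ?_ h2)
      rw [norm_neg]
    simpa [s] using this
  have hcon : ContractingWith (‖c‖₊) (hmaps.restrict f s s) := by
    refine ⟨by exact_mod_cast hc, LipschitzWith.of_dist_le_mul ?_⟩
    rintro ⟨x, hx⟩ ⟨y, hy⟩
    have hx : ‖x‖ ≤ ‖c‖ := by simpa [s] using hx
    have hy : ‖y‖ ≤ ‖c‖ := by simpa [s] using hy
    rw [Subtype.dist_eq, Subtype.dist_eq]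
    simp only [Set.MapsTo.val_restrict_apply]
    rw [dist_eq_norm, dist_eq_norm]
    have h3 : f x - f y = -((x + y) * (x - y)) := by simp only [f]; ring
    rw [h3, norm_neg, norm_mul]
    refine mul_le_mul_of_nonneg_right ?_ (norm_nonneg _)
    exact (IsUltrametricDist.norm_add_le_max _ _).trans (max_le hx hy)
  have hcomp : IsComplete s := Metric.isClosed_closedBall.isComplete
  obtain ⟨t, -, ht, -⟩ := hcon.exists_fixedPoint' hcomp hmaps (x := 0)
    (by simp [s]) (edist_ne_top _ _)
  refine ⟨t, ?_⟩
  have : -c - t ^ 2 = t := ht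
  linear_combination -this

theorem aux_finite_field {F : Type*} [Field F] [Finite F] :
    IsSquare (-1 : F) ∨ IsSquare (2 : F) ∨ IsSquare (-2 : F) := by
  have := Fintype.ofFinite F
  rw [FiniteField.isSquare_neg_one_iff, FiniteField.isSquare_two_iff,
    FiniteField.isSquare_neg_two_iff]
  lia

theorem aux_alg {L : Type*} [Field L] (h2 : (2 : L) ≠ 0) (θ : L) (hθ : θ ^ 2 = 7)
    (h : (∃ s : L, s ^ 2 = -1) ∨ (∃ s : L, s ^ 2 = 2) ∨ (∃ s : L, s ^ 2 = -2)) :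
    ∃ y : L, y ^ 8 = 32257 + 12192 * θ := by
  have key : ∃ s : L, s ^ 8 = 16 := by
    rcases h with ⟨s, hs⟩ | ⟨s, hs⟩ | ⟨s, hs⟩
    · refine ⟨1 + s, ?_⟩
      have h1 : (1 + s) ^ 2 = 2 * s := by linear_combination hs
      calc (1 + s) ^ 8 = ((1 + s) ^ 2) ^ 4 := by ring
        _ = 16 * (s ^ 2) ^ 2 := by rw [h1]; ring
        _ = 16 := by rw [hs]; ring
    · exact ⟨s, by rw [show s ^ 8 = (s ^ 2) ^ 4 by ring, hs]; norm_num⟩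
    · exact ⟨s, by rw [show s ^ 8 = (s ^ 2) ^ 4 by ring, hs]; norm_num⟩
  obtain ⟨s, hs⟩ := key
  have h16 : (16 : L) ≠ 0 := by
    rw [show (16 : L) = 2 ^ 4 by norm_num]; exact pow_ne_zero _ h2
  refine ⟨(3 + θ) / s, ?_⟩
  rw [div_pow, hs, div_eq_iff h16]
  have h1 : (3 + θ) ^ 2 = 16 + 6 * θ := by linear_combination hθ
  have h3 : (16 + 6 * θ) ^ 2 = 508 + 192 * θ := by linear_combination 36 * hθ
  rw [show (3 + θ) ^ 8 = (((3 + θ) ^ 2) ^ 2) ^ 2 by ring, h1, h3]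
  linear_combination 192 ^ 2 * hθ

theorem aux_repr {K : Type*} [Field K] [NumberField K] (θ : K) (hθ : θ ^ 2 = 7)
    (hgen : Algebra.adjoin ℚ {θ} = ⊤) (x : K) : ∃ a b : ℚ, x = a + b * θ := by
  have hx : x ∈ Algebra.adjoin ℚ {θ} := by rw [hgen]; trivial
  induction hx using Algebra.adjoin_induction with
  | mem x hx => exact ⟨0, 1, by simp_all⟩
  | algebraMap r => exact ⟨r, 0, by simp⟩
  | add x y _ _ hx hy =>
    obtain ⟨a, b, rfl⟩ := hx
    obtain ⟨c, d, rfl⟩ := hy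
    exact ⟨a + c, b + d, by push_cast; ring⟩
  | mul x y _ _ hx hy =>
    obtain ⟨a, b, rfl⟩ := hx
    obtain ⟨c, d, rfl⟩ := hy
    exact ⟨a * c + 7 * b * d, a * d + b * c, by
      push_cast; linear_combination (b : K) * d * hθ⟩

theorem aux_irrat (n : ℕ) (hn : ¬ IsSquare n) (q : ℚ) : q ^ 2 ≠ n := by
  intro h
  have h1 : IsSquare ((n : ℕ) : ℚ) := ⟨q, by rw [← h]; ring⟩
  exact hn (Rat.isSquare_natCast_iff.mp h1)

theorem aux_nonsq {K : Type*} [Field K] [NumberField K] (θ : K) (hθ : θ ^ 2 = 7)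
    (hgen : Algebra.adjoin ℚ {θ} = ⊤) (c : ℚ) (hc : c = 2 ∨ c < 0) (x : K) :
    x ^ 2 ≠ c := by
  intro hx
  obtain ⟨a, b, rfl⟩ := aux_repr θ hθ hgen x
  have h7 : ∀ q : ℚ, q ^ 2 ≠ 7 := fun q => by
    have := aux_irrat 7 (by decide +kernel) q
    exact_mod_cast this
  have h2 : ∀ q : ℚ, q ^ 2 ≠ 2 := fun q => by
    have := aux_irrat 2 (by decide +kernel) q
    exact_mod_cast this
  have h14 : ∀ q : ℚ, q ^ 2 ≠ 14 := fun q => by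
    have := aux_irrat 14 (by decide +kernel) q
    exact_mod_cast this
  have e1 : (2 * a * b : K) * θ = c - a ^ 2 - 7 * b ^ 2 := by
    linear_combination hx - (b : K) ^ 2 * hθ
  have hab : a * b = 0 := by
    by_contra hab
    have habK : (2 * a * b : K) ≠ 0 := by
      have : (2 * a * b : ℚ) ≠ 0 := by
        rw [mul_assoc]; exact mul_ne_zero two_ne_zero hab
      exact_mod_cast this
    have : θ = (((c - a ^ 2 - 7 * b ^ 2) / (2 * a * b) : ℚ) : K) := by
      push_cast
      rw [eq_div_iff habK, mul_comm]; exact e1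
    rw [this] at hθ
    exact h7 _ (by exact_mod_cast hθ)
  have e2 : a ^ 2 + 7 * b ^ 2 = c := by
    have habK : (a * b : K) = 0 := by exact_mod_cast hab
    have : (a ^ 2 + 7 * b ^ 2 : K) = c := by linear_combination e1 - 2 * θ * habK
    exact_mod_cast this
  rcases hc with rfl | hc
  · rcases mul_eq_zero.mp hab with rfl | rfl
    · exact h14 (7 * b) (by linear_combination 7 * e2)
    · exact h2 a (by linear_combination e2)
  · nlinarith [sq_nonneg a, sq_nonneg b]

theorem aux_global {K : Type*} [Field K] [NumberField K] (θ : K) (hθ : θ ^ 2 = 7)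
    (hgen : Algebra.adjoin ℚ {θ} = ⊤) (y : K) : y ^ 8 ≠ 32257 + 12192 * θ := by
  intro hy
  have hs2 : ∀ x : K, x ^ 2 ≠ 2 := fun x => by
    simpa using aux_nonsq θ hθ hgen 2 (Or.inl rfl) x
  have hsm2 : ∀ x : K, x ^ 2 ≠ -2 := fun x => by
    simpa using aux_nonsq θ hθ hgen (-2) (Or.inr (by norm_num)) x
  have hsm1 : ∀ x : K, x ^ 2 ≠ -1 := fun x => by
    simpa using aux_nonsq θ hθ hgen (-1) (Or.inr (by norm_num)) x
  have hy0 : y ≠ 0 := by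
    rintro rfl
    have h1 : (32257 - 12192 * θ) * (32257 + 12192 * θ) = 1 := by
      linear_combination -12192 ^ 2 * hθ
    rw [← hy] at h1
    simp at h1
  have h8 : (3 + θ) ^ 8 = 16 * y ^ 8 := by
    have h1 : (3 + θ) ^ 2 = 16 + 6 * θ := by linear_combination hθ
    have h3 : (16 + 6 * θ) ^ 2 = 508 + 192 * θ := by linear_combination 36 * hθ
    rw [show (3 + θ) ^ 8 = (((3 + θ) ^ 2) ^ 2) ^ 2 by ring, h1, h3, hy]
    linear_combination 192 ^ 2 * hθ
  obtain ⟨s, hs⟩ : ∃ s : K, s ^ 8 = 16 := ⟨(3 + θ) / y, by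
    rw [div_pow, h8, mul_div_assoc, div_self (pow_ne_zero _ hy0), mul_one]⟩
  have hf : (s ^ 2 - 2) * ((s ^ 2 + 2) * (((s - 1) ^ 2 + 1) * ((s + 1) ^ 2 + 1))) = 0 := by
    linear_combination hs
  rcases mul_eq_zero.mp hf with h | hf
  · exact hs2 s (by linear_combination h)
  rcases mul_eq_zero.mp hf with h | hf
  · exact hsm2 s (by linear_combination h)
  rcases mul_eq_zero.mp hf with h | h
  · exact hsm1 (s - 1) (by linear_combination h)
  · exact hsm1 (s + 1) (by linear_combination h)

theorem aux_inf {K : Type*} [Field K] [NumberField K] (w : InfinitePlace K) :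
    ∃ s : w.Completion, s ^ 2 = 2 := by
  rcases w.isReal_or_isComplex with hw | hw
  · let e := InfinitePlace.Completion.ringEquivRealOfIsReal hw
    refine ⟨e.symm (Real.sqrt 2), ?_⟩
    rw [← map_pow, Real.sq_sqrt (by norm_num)]
    exact map_ofNat e.symm 2
  · let e := InfinitePlace.Completion.ringEquivComplexOfIsComplex hw
    obtain ⟨z, hz⟩ := IsAlgClosed.exists_pow_nat_eq (2 : ℂ) (n := 2) (by norm_num)
    refine ⟨e.symm z, ?_⟩
    rw [← map_pow, hz]
    exact map_ofNat e.symm 2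

theorem aux_fin {K : Type*} [Field K] [NumberField K] (θ : K) (hθ : θ ^ 2 = 7)
    (v : HeightOneSpectrum (𝓞 K)) :
    (∃ s : v.adicCompletion K, s ^ 2 = -1) ∨ (∃ s : v.adicCompletion K, s ^ 2 = 2) ∨
      (∃ s : v.adicCompletion K, s ^ 2 = -2) := by
  have hult : IsUltrametricDist (v.adicCompletion K) := Valued.instIsUltrametricDist _ (WithZero (Multiplicative ℤ))
  let φ : K →+* v.adicCompletion K := FinitePlace.embedding v
  have hinj : Function.Injective φ := φ.injective
  have h0 : ∀ n : ℕ, n ≠ 0 → (n : v.adicCompletion K) ≠ 0 := by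
    intro n hn h
    have : φ (n : K) = φ 0 := by simpa using h
    exact hn (by exact_mod_cast hinj this)
  have e2 : φ (algebraMap (𝓞 K) K 2) = 2 := by rw [map_ofNat (algebraMap (𝓞 K) K) 2]; exact map_ofNat φ 2
  by_cases h2 : (2 : 𝓞 K) ∈ v.asIdeal
  · left
    have hn : ‖(2 : v.adicCompletion K)‖ < 1 := by
      have := (FinitePlace.norm_lt_one_iff_mem K v (2 : 𝓞 K)).mpr h2
      rw [← e2]; exact this
    obtain ⟨t, ht⟩ := aux_quad _ hn
    have h7 : (2 * t + 1) ^ 2 = -7 := by linear_combination 4 * ht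
    have h70 : (7 : v.adicCompletion K) ≠ 0 := by exact_mod_cast h0 7 (by norm_num)
    refine ⟨φ θ / (2 * t + 1), ?_⟩
    have h77 : φ θ ^ 2 = 7 := by rw [← map_pow, hθ]; exact map_ofNat φ 7
    rw [div_pow, h7, h77, div_neg, div_self h70]
  · have hsq : ∀ a : 𝓞 K, a ∉ v.asIdeal → IsSquare (Ideal.Quotient.mk v.asIdeal a) →
        ∃ s : v.adicCompletion K, s ^ 2 = φ (algebraMap (𝓞 K) K a) := by
      rintro a ha ⟨r, hr⟩
      obtain ⟨b, rfl⟩ := Ideal.Quotient.mk_surjective r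
      have hmem : b ^ 2 - a ∈ v.asIdeal := by
        rw [← Ideal.Quotient.eq_zero_iff_mem, map_sub, map_pow, hr]; ring
      have hb : b ∉ v.asIdeal := fun hb => ha (by
        have := v.asIdeal.sub_mem (v.asIdeal.pow_mem_of_mem hb 2 (by norm_num)) hmem
        simpa using this)
      have n1 : ‖φ (algebraMap (𝓞 K) K (b ^ 2 - a))‖ < 1 :=
        (FinitePlace.norm_lt_one_iff_mem K v _).mpr hmem
      have n2 : ‖φ (algebraMap (𝓞 K) K b)‖ = 1 :=
        (FinitePlace.norm_eq_one_iff_notMem K v _).mpr hb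
      have n3 : ‖φ (algebraMap (𝓞 K) K 2)‖ = 1 :=
        (FinitePlace.norm_eq_one_iff_notMem K v _).mpr h2
      rw [e2] at n3
      simp only [map_sub, map_pow] at n1
      set B := φ (algebraMap (𝓞 K) K b)
      set A := φ (algebraMap (𝓞 K) K a)
      have hB : B ≠ 0 := by rw [← norm_ne_zero_iff, n2]; norm_num
      have h20 : (2 : v.adicCompletion K) ≠ 0 := by rw [← norm_ne_zero_iff, n3]; norm_num
      obtain ⟨t, ht⟩ := aux_quad ((B ^ 2 - A) / (2 * B) ^ 2) (by
        rw [norm_div, norm_pow, norm_mul, n2, n3]; simpa using n1)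
      refine ⟨B + 2 * B * t, ?_⟩
      have h4 : (2 * B) ^ 2 ≠ 0 := pow_ne_zero _ (mul_ne_zero h20 hB)
      have h5 : (2 * B) ^ 2 * ((B ^ 2 - A) / (2 * B) ^ 2) = B ^ 2 - A := by
        rw [mul_div_assoc', mul_div_cancel_left₀ _ h4]
      linear_combination (2 * B) ^ 2 * ht - h5
    have := v.isMaximal
    let : Field (𝓞 K ⧸ v.asIdeal) := Ideal.Quotient.field _
    have : Finite (𝓞 K ⧸ v.asIdeal) := Ideal.finiteQuotientOfFreeOfNeBot _ v.ne_bot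
    have n1 : (-1 : 𝓞 K) ∉ v.asIdeal := fun h =>
      h2 (by have := v.asIdeal.mul_mem_left (-2) h; simpa using this)
    have n2 : (-2 : 𝓞 K) ∉ v.asIdeal := fun h => h2 (by simpa using v.asIdeal.neg_mem h)
    rcases aux_finite_field (F := 𝓞 K ⧸ v.asIdeal) with h | h | h
    · left; simpa using hsq (-1) n1 (by simpa using h)
    · right; left; 
      have h' := hsq 2 h2 (by rw [map_ofNat (Ideal.Quotient.mk v.asIdeal) 2]; exact h)
      rwa [e2] at h'
    · right; right; 
      have h' := hsq (-2) n2
        (by rw [map_neg, map_ofNat (Ideal.Quotient.mk v.asIdeal) 2]; exact h)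
      rwa [map_neg, map_neg, e2] at h'

theorem aux_local {K : Type*} [Field K] [NumberField K] (θ : K) (hθ : θ ^ 2 = 7)
    (v : NFPlace K) : ∃ y : placeCompletion K v,
        y ^ 8 = algebraMap K (placeCompletion K v) (32257 + 12192 * θ) := by
  have h2 : (2 : placeCompletion K v) ≠ 0 := by
    have := (algebraMap K (placeCompletion K v)).injective.ne (two_ne_zero' K)
    rwa [map_ofNat (algebraMap K (placeCompletion K v)) 2, map_zero] at this
  have h7 : (algebraMap K (placeCompletion K v) θ) ^ 2 = 7 := by
    rw [← map_pow, hθ]; exact map_ofNat _ 7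
  have := aux_alg h2 (algebraMap K (placeCompletion K v) θ) h7 (by
    cases v with
    | inl v => exact aux_fin θ hθ v
    | inr w => exact Or.inr (Or.inl (aux_inf w)))
  rw [map_add, map_mul, map_ofNat (algebraMap K (placeCompletion K v)) 32257,
    map_ofNat (algebraMap K (placeCompletion K v)) 12192]
  exact this

/-- Let `K = ℚ(√7)` (a field over `ℚ` generated by `θ` with `θ² = 7`). The
natural map `𝒪_K^×/(𝒪_K^×)^8 → ∏_v K_v^×/(K_v^×)^8`, the product over all places `v` of `K`,
is not injective: the unit `u = 32257 + 12192√7` of `𝒪_K` is an 8th power in the completion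
`K_v` for every place `v` of `K`, but `u` is not an 8th power in `K`. -/
theorem stmt_8 (K : Type*) [Field K] [NumberField K] (θ : K) (hθ : θ ^ 2 = 7)
    (hgen : Algebra.adjoin ℚ {θ} = ⊤) :
    ¬ Function.Injective (globalToLocalEighthPowers K) ∧
    ∃ u : (𝓞 K)ˣ,
      algebraMap (𝓞 K) K (u : 𝓞 K) = 32257 + 12192 * θ ∧
      (∀ v : NFPlace K, ∃ y : placeCompletion K v,
        y ^ 8 = algebraMap K (placeCompletion K v) (algebraMap (𝓞 K) K (u : 𝓞 K))) ∧
      ¬ ∃ y : K, y ^ 8 = algebraMap (𝓞 K) K (u : 𝓞 K) := by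
  have hint : IsIntegral ℤ θ := by
    refine IsIntegral.of_pow (n := 2) (by norm_num) ?_
    rw [hθ]
    have h := isIntegral_algebraMap (R := ℤ) (A := K) (x := 7)
    rwa [map_ofNat] at h
  let t : 𝓞 K := ⟨θ, hint⟩
  have htθ : algebraMap (𝓞 K) K t = θ := rfl
  have ht : t ^ 2 = 7 := by
    apply FaithfulSMul.algebraMap_injective (𝓞 K) K
    rw [map_pow, htθ, hθ]; exact (map_ofNat _ 7).symm
  have hmul : (32257 + 12192 * t) * (32257 - 12192 * t) = 1 := by
    linear_combination -12192 ^ 2 * ht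
  let u : (𝓞 K)ˣ := ⟨32257 + 12192 * t, 32257 - 12192 * t, hmul, by rw [mul_comm]; exact hmul⟩
  have hu : algebraMap (𝓞 K) K (u : 𝓞 K) = 32257 + 12192 * θ := by
    change algebraMap (𝓞 K) K (32257 + 12192 * t) = _
    rw [map_add, map_mul, htθ, map_ofNat, map_ofNat]
  have hloc : ∀ v : NFPlace K, ∃ y : placeCompletion K v,
        y ^ 8 = algebraMap K (placeCompletion K v) (algebraMap (𝓞 K) K (u : 𝓞 K)) := by
    intro v; rw [hu]; exact aux_local θ hθ v
  have hglob : ¬ ∃ y : K, y ^ 8 = algebraMap (𝓞 K) K (u : 𝓞 K) := by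
    rintro ⟨y, hy⟩
    exact aux_global θ hθ hgen y (by rw [hy, hu])
  refine ⟨?_, u, hu, hloc, hglob⟩
  intro hinj
  have h1 : globalToLocalEighthPowers K (QuotientGroup.mk u) = 1 := by
    ext v
    refine (QuotientGroup.eq_one_iff _).mpr ?_
    obtain ⟨y, hy⟩ := hloc v
    have hne : y ≠ 0 := by
      rintro rfl
      have h0 : algebraMap (𝓞 K) K (u : 𝓞 K) ≠ 0 := by simp
      rw [zero_pow (by norm_num)] at hy
      exact h0 ((map_eq_zero _).mp hy.symm)
    refine ⟨Units.mk0 y hne, ?_⟩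
    ext
    exact hy
  have h2 : (QuotientGroup.mk u : (𝓞 K)ˣ ⧸ (powMonoidHom 8 : (𝓞 K)ˣ →* (𝓞 K)ˣ).range) = 1 :=
    hinj (by rw [h1, map_one])
  obtain ⟨w, hw⟩ := (QuotientGroup.eq_one_iff _).mp h2
  refine hglob ⟨algebraMap (𝓞 K) K (w : 𝓞 K), ?_⟩
  rw [← hw, ← map_pow]
  rfl
end

section
/- Let k be a number field, let e ∈ ℕ, and let 2^r be the largest power of 2 dividing e. Let ε ∈ 𝒪_k^× be a unit such that ε is an e-th power in the completion k_v for all but finitely many places v of k. Then ε is an e-th power in k_v for every place v of k which does not both lie above 2 and fail to split in the extension k(μ_{2^r})/k; in other words, ε ∈ (k_v^×)^e for all places v outside the set of finite places above 2 that do not split in k(μ_{2^r})/k. -/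
open IsDedekindDomain NumberField

section ZetaPart
open ENNReal

/-- weighted sum over multisets avoiding `T` -/
noncomputable def mzeta {X : Type*} (w : X → ℝ≥0∞) (T : Set X) : ℝ≥0∞ :=
  ∑' m : {m : Multiset X // ∀ x ∈ m, x ∉ T}, (m.1.map w).prod

lemma mzeta_sq_le {X Y : Type*} (w : X → ℝ≥0∞) (w' : Y → ℝ≥0∞) (T : Set X) (f₁ f₂ : X → Y)
    (h₁ : Set.InjOn f₁ Tᶜ) (h₂ : Set.InjOn f₂ Tᶜ) (hd : ∀ x ∉ T, ∀ y ∉ T, f₁ x ≠ f₂ y)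
    (hw₁ : ∀ x ∉ T, w' (f₁ x) = w x) (hw₂ : ∀ x ∉ T, w' (f₂ x) = w x) :
    mzeta w T * mzeta w T ≤ mzeta w' ∅ := by
  classical
  unfold mzeta
  rw [← ENNReal.tsum_mul_right]
  simp_rw [← ENNReal.tsum_mul_left]
  rw [← ENNReal.tsum_prod (f := fun (a b : {m : Multiset X // ∀ x ∈ m, x ∉ T}) =>
    (a.1.map w).prod * (b.1.map w).prod)]
  let g : {m : Multiset X // ∀ x ∈ m, x ∉ T} × {m : Multiset X // ∀ x ∈ m, x ∉ T} →
      {m : Multiset Y // ∀ x ∈ m, x ∉ (∅ : Set Y)} := fun p =>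
    ⟨p.1.1.map f₁ + p.2.1.map f₂, by simp⟩
  have hg : Function.Injective g := by
    rintro ⟨⟨a, ha⟩, ⟨b, hb⟩⟩ ⟨⟨a', ha'⟩, ⟨b', hb'⟩⟩ h
    have h' : a.map f₁ + b.map f₂ = a'.map f₁ + b'.map f₂ := congrArg Subtype.val h
    have e1 : a.map f₁ = a'.map f₁ := by
      have := congrArg (Multiset.filter (fun y => y ∈ f₁ '' Tᶜ)) h'
      simp only [Multiset.filter_add] at this
      rw [Multiset.filter_eq_self.2, Multiset.filter_eq_nil.2, Multiset.filter_eq_self.2,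
        Multiset.filter_eq_nil.2] at this
      · simpa using this
      · intro y hy
        obtain ⟨x, hx, rfl⟩ := Multiset.mem_map.1 hy
        rintro ⟨z, hz, hzx⟩
        exact hd z hz x (hb' x hx) hzx
      · intro y hy
        obtain ⟨x, hx, rfl⟩ := Multiset.mem_map.1 hy
        exact ⟨x, ha' x hx, rfl⟩
      · intro y hy
        obtain ⟨x, hx, rfl⟩ := Multiset.mem_map.1 hy
        rintro ⟨z, hz, hzx⟩
        exact hd z hz x (hb x hx) hzx
      · intro y hy
        obtain ⟨x, hx, rfl⟩ := Multiset.mem_map.1 hy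
        exact ⟨x, ha x hx, rfl⟩
    have e2 : b.map f₂ = b'.map f₂ := by
      rw [e1] at h'; simpa using h'
    have key : ∀ (f : X → Y), Set.InjOn f Tᶜ → ∀ (a a' : Multiset X), (∀ x ∈ a, x ∉ T) →
        (∀ x ∈ a', x ∉ T) → a.map f = a'.map f → a = a' := by
      intro f hf a a' ha ha' h
      rcases isEmpty_or_nonempty X with hX | hX
      · rw [Multiset.eq_zero_of_forall_notMem (s := a) (fun x => (hX.false x).elim),
          Multiset.eq_zero_of_forall_notMem (s := a') (fun x => (hX.false x).elim)]
      have := congrArg (Multiset.map (Function.invFunOn f Tᶜ)) h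
      rw [Multiset.map_map, Multiset.map_map] at this
      rwa [Multiset.map_congr rfl (g := id), Multiset.map_congr (s := a') rfl (g := id),
        Multiset.map_id, Multiset.map_id] at this
      · intro x hx; exact hf.leftInvOn_invFunOn (ha' x hx)
      · intro x hx; exact hf.leftInvOn_invFunOn (ha x hx)
    have := key f₁ h₁ a a' ha ha' e1
    have := key f₂ h₂ b b' hb hb' e2
    subst_vars; rfl
  refine le_trans (le_of_eq ?_) (ENNReal.tsum_comp_le_tsum_of_injective hg _)
  refine tsum_congr ?_
  rintro ⟨⟨a, ha⟩, ⟨b, hb⟩⟩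
  simp only [g, Multiset.map_add, Multiset.prod_add, Multiset.map_map]
  congr 2
  · exact Multiset.map_congr rfl fun x hx => (hw₁ x (ha x hx)).symm
  · exact Multiset.map_congr rfl fun x hx => (hw₂ x (hb x hx)).symm

lemma mzeta_insert {X : Type*} (w : X → ℝ≥0∞) (T : Set X) (x : X) :
    mzeta w T ≤ mzeta w (insert x T) + w x * mzeta w T := by
  classical
  unfold mzeta
  rw [← ENNReal.tsum_mul_left]
  let A := {m : Multiset X // ∀ y ∈ m, y ∉ T}
  let B := {m : Multiset X // ∀ y ∈ m, y ∉ insert x T}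
  let F : B ⊕ A → ℝ≥0∞ := Sum.elim (fun b => (b.1.map w).prod) (fun a => w x * (a.1.map w).prod)
  have : ∑' (m : A), (m.1.map w).prod ≤ ∑' c : B ⊕ A, F c := by
    let g : A → B ⊕ A := fun m => if h : x ∈ m.1 then
        Sum.inr ⟨m.1.erase x, fun y hy => m.2 y (Multiset.mem_of_mem_erase hy)⟩
      else Sum.inl ⟨m.1, fun y hy => by
        rintro (rfl | h')
        · exact h hy
        · exact m.2 y hy h'⟩
    have hg : Function.Injective g := by
      rintro ⟨a, ha⟩ ⟨b, hb⟩ h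
      simp only [g] at h
      split_ifs at h with h1 h2 h2
      · have h' := congrArg Subtype.val (Sum.inr.inj h)
        simp only at h'
        rw [Subtype.mk.injEq, ← Multiset.cons_erase h1, h', Multiset.cons_erase h2]
      · have h' := Sum.inl.inj h
        exact Subtype.ext (congrArg (fun z : B => z.1) h')
    refine le_trans (le_of_eq ?_) (ENNReal.tsum_comp_le_tsum_of_injective hg F)
    refine tsum_congr ?_
    rintro ⟨a, ha⟩
    simp only [g]
    split_ifs with h
    · simp only [F, Sum.elim_inr]
      conv_lhs => rw [← Multiset.cons_erase h]
      simp
    · simp [F]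
  refine this.trans (le_of_eq ?_)
  rw [Summable.tsum_sum ENNReal.summable ENNReal.summable]
  rfl

lemma mzeta_finite {X : Type*} (w : X → ℝ≥0∞) (hw : ∀ x, w x ≤ 1 / 2)
    (hfin : mzeta w ∅ ≠ ⊤) (T : Set X) (hT : T.Finite) :
    mzeta w ∅ ≤ 2 ^ T.ncard * mzeta w T ∧ mzeta w T ≠ ⊤ := by
  induction T, hT using Set.Finite.induction_on with
  | empty => simpa using hfin
  | @insert x T hx hT ih =>
    obtain ⟨ih1, ih2⟩ := ih
    have hle : mzeta w (insert x T) ≤ mzeta w T := by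
      unfold mzeta
      let g : {m : Multiset X // ∀ y ∈ m, y ∉ insert x T} → {m : Multiset X // ∀ y ∈ m, y ∉ T} :=
        fun m => ⟨m.1, fun y hy h => m.2 y hy (Set.mem_insert_of_mem _ h)⟩
      have hg : Function.Injective g := by
        rintro ⟨a, ha⟩ ⟨b, hb⟩ h
        simpa [g] using h
      exact ENNReal.tsum_comp_le_tsum_of_injective hg (fun m => (m.1.map w).prod)
    refine ⟨?_, ne_top_of_le_ne_top ih2 hle⟩
    rw [Set.ncard_insert_of_notMem hx hT, pow_succ, mul_assoc]
    refine ih1.trans ?_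
    gcongr
    have h1 := mzeta_insert w T x
    have h2 : mzeta w T ≤ mzeta w (insert x T) + 1 / 2 * mzeta w T :=
      h1.trans (by gcongr; exact hw x)
    generalize mzeta w T = a at *
    have hb := ne_top_of_le_ne_top ih2 hle
    generalize mzeta w (insert x T) = b at *
    lift a to NNReal using ih2
    lift b to NNReal using hb
    have h3 : ((1 / 2 : ℝ≥0∞)) = ((1 / 2 : NNReal) : ℝ≥0∞) := by simp
    rw [h3] at h2
    norm_cast at h2 ⊢
    rw [← NNReal.coe_le_coe] at h2 ⊢
    push_cast at h2 ⊢
    linarith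

variable (K : Type*) [Field K] [NumberField K]

noncomputable def pweight (s : ℝ) (P : HeightOneSpectrum (𝓞 K)) : ℝ≥0∞ :=
  ENNReal.ofReal ((Ideal.absNorm P.asIdeal : ℝ) ^ (-s))

lemma pweight_le (s : ℝ) (hs : 1 ≤ s) (P : HeightOneSpectrum (𝓞 K)) : pweight K s P ≤ 1 / 2 := by
  have h : 2 ≤ Ideal.absNorm P.asIdeal := HeightOneSpectrum.one_lt_absNorm P
  have h' : (2 : ℝ) ≤ Ideal.absNorm P.asIdeal := by exact_mod_cast h
  have h3 : ((1 / 2 : ℝ≥0∞)) = ENNReal.ofReal (1/2) := by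
    rw [ENNReal.ofReal_div_of_pos (by norm_num)]; simp
  rw [pweight, h3]
  apply ENNReal.ofReal_le_ofReal
  calc (Ideal.absNorm P.asIdeal : ℝ) ^ (-s) ≤ (Ideal.absNorm P.asIdeal : ℝ) ^ (-1 : ℝ) :=
        Real.rpow_le_rpow_of_exponent_le (by linarith) (by linarith)
    _ ≤ 1 / 2 := by
        rw [Real.rpow_neg_one, one_div]; gcongr

lemma mprod_inj : Function.Injective
    (fun m : Multiset (HeightOneSpectrum (𝓞 K)) => (m.map HeightOneSpectrum.asIdeal).prod) := by
  classical
  intro a b h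
  have key : ∀ m : Multiset (HeightOneSpectrum (𝓞 K)),
      UniqueFactorizationMonoid.normalizedFactors (m.map HeightOneSpectrum.asIdeal).prod =
        m.map HeightOneSpectrum.asIdeal := by
    intro m
    apply UniqueFactorizationMonoid.normalizedFactors_prod_of_prime
    intro p hp
    obtain ⟨P, -, rfl⟩ := Multiset.mem_map.1 hp
    exact P.prime
  have h2 := congrArg UniqueFactorizationMonoid.normalizedFactors h
  simp only [key] at h2
  refine Multiset.map_injective (fun P Q h => ?_) h2
  exact HeightOneSpectrum.ext h

lemma mprod_surj (I : Ideal (𝓞 K)) (hI : I ≠ ⊥) :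
    ∃ m : Multiset (HeightOneSpectrum (𝓞 K)), (m.map HeightOneSpectrum.asIdeal).prod = I := by
  classical
  obtain ⟨f, hf, hu⟩ := UniqueFactorizationMonoid.exists_prime_factors I hI
  refine ⟨f.pmap (fun P (hP : Prime P) => ⟨P, Ideal.isPrime_of_prime hP, hP.ne_zero⟩) hf, ?_⟩
  rw [Multiset.map_pmap]
  simp only [Multiset.pmap_eq_map, Multiset.map_id']
  exact associated_iff_eq.1 hu

lemma mweight (s : ℝ) (m : Multiset (HeightOneSpectrum (𝓞 K))) :
    (m.map (pweight K s)).prod =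
      ENNReal.ofReal ((Ideal.absNorm (m.map HeightOneSpectrum.asIdeal).prod : ℝ) ^ (-s)) := by
  induction m using Multiset.induction_on with
  | empty => simp
  | cons P m ih =>
    simp only [Multiset.map_cons, Multiset.prod_cons, ih, map_mul, Nat.cast_mul, pweight]
    rw [Real.mul_rpow (by positivity) (by positivity), ENNReal.ofReal_mul (by positivity)]

lemma mzeta_eq (s : ℝ) : mzeta (pweight K s) ∅ =
    ∑' I : {I : Ideal (𝓞 K) // I ≠ ⊥}, ENNReal.ofReal ((Ideal.absNorm I.1 : ℝ) ^ (-s)) := by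
  unfold mzeta
  let g : {m : Multiset (HeightOneSpectrum (𝓞 K)) // ∀ x ∈ m, x ∉ (∅ : Set _)} →
    {I : Ideal (𝓞 K) // I ≠ ⊥} := fun m => ⟨(m.1.map HeightOneSpectrum.asIdeal).prod, by
      rw [← Ideal.zero_eq_bot]
      apply Multiset.prod_ne_zero
      intro h
      obtain ⟨P, -, hP⟩ := Multiset.mem_map.1 h
      exact P.ne_bot hP⟩
  have hg : Function.Bijective g := by
    constructor
    · rintro ⟨a, ha⟩ ⟨b, hb⟩ h
      exact Subtype.ext (mprod_inj K (congrArg Subtype.val h))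
    · rintro ⟨I, hI⟩
      obtain ⟨m, hm⟩ := mprod_surj K I hI
      exact ⟨⟨m, by simp⟩, Subtype.ext hm⟩
  rw [← (Equiv.ofBijective g hg).tsum_eq]
  refine tsum_congr fun m => ?_
  rw [mweight]
  rfl

open Filter Topology in
lemma mzeta_asymp : ∀ᶠ s : ℝ in 𝓝[>] 1, mzeta (pweight K s) ∅ ≠ ⊤ ∧
    (dedekindZeta K s) = ((mzeta (pweight K s) ∅).toReal : ℂ) := by
  have ht := tendsto_sub_one_mul_dedekindZeta_nhdsGT K
  have hne : ∀ᶠ s : ℝ in 𝓝[>] 1, ((s - 1 : ℝ) : ℂ) * dedekindZeta K s ≠ 0 := by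
    have := ht.eventually_ne (show ((dedekindZeta_residue K : ℝ) : ℂ) ≠ 0 by
      exact_mod_cast dedekindZeta_residue_ne_zero K)
    simpa using this
  filter_upwards [hne] with s hs
  have hz : dedekindZeta K s ≠ 0 := right_ne_zero_of_mul hs
  let b : ℕ → ℝ := fun n => if n = 0 then 0 else
    (Nat.card {I : Ideal (𝓞 K) // Ideal.absNorm I = n} : ℝ) * (n : ℝ) ^ (-s)
  have hb0 : ∀ n, 0 ≤ b n := by
    intro n; simp only [b]; split_ifs
    · exact le_rfl
    · positivity
  have hterm : ∀ n, LSeries.term (fun n ↦ (Nat.card {I : Ideal (𝓞 K) // Ideal.absNorm I = n} : ℂ))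
      (s : ℂ) n = ((b n : ℝ) : ℂ) := by
    intro n
    rw [LSeries.term_def]
    simp only [b]
    split_ifs with h
    · simp
    · push_cast
      rw [Complex.ofReal_cpow (by positivity), div_eq_mul_inv, ← Complex.cpow_neg]
      push_cast
      rfl
  have hL : dedekindZeta K s = ∑' n, ((b n : ℝ) : ℂ) := by
    rw [dedekindZeta, LSeries]; exact tsum_congr hterm
  have hsum : Summable b := by
    by_contra h
    apply hz
    rw [hL, tsum_eq_zero_of_not_summable]
    rwa [Complex.summable_ofReal]
  have hL' : dedekindZeta K s = ((∑' n, b n : ℝ) : ℂ) := by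
    rw [hL, Complex.ofReal_tsum]
  have hm : mzeta (pweight K s) ∅ = ENNReal.ofReal (∑' n, b n) := by
    rw [mzeta_eq, ENNReal.ofReal_tsum_of_nonneg hb0 hsum]
    rw [← (Equiv.sigmaFiberEquiv (fun I : {I : Ideal (𝓞 K) // I ≠ ⊥} =>
      Ideal.absNorm I.1)).tsum_eq, ENNReal.tsum_sigma']
    refine tsum_congr fun n => ?_
    have e1 : ∀ I : {I : {I : Ideal (𝓞 K) // I ≠ ⊥} // Ideal.absNorm I.1 = n},
      ENNReal.ofReal ((Ideal.absNorm ((Equiv.sigmaFiberEquiv (fun I : {I : Ideal (𝓞 K) // I ≠ ⊥} =>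
      Ideal.absNorm I.1)) ⟨n, I⟩).1 : ℝ) ^ (-s)) = ENNReal.ofReal ((n : ℝ) ^ (-s)) := by
      rintro ⟨I, hI⟩
      simp [Equiv.sigmaFiberEquiv, hI]
    rw [tsum_congr e1]
    by_cases hn : n = 0
    · have : IsEmpty {I : {I : Ideal (𝓞 K) // I ≠ ⊥} // Ideal.absNorm I.1 = n} := by
        constructor
        rintro ⟨⟨I, hI⟩, h⟩
        apply hI
        rw [hn] at h
        exact Ideal.absNorm_eq_zero_iff.1 h
      simp [b, hn]
    · have hfin : Finite {I : Ideal (𝓞 K) // Ideal.absNorm I = n} :=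
        (Ideal.finite_setOfPred_absNorm_eq n).to_subtype
      let e : {I : {I : Ideal (𝓞 K) // I ≠ ⊥} // Ideal.absNorm I.1 = n} ≃
          {I : Ideal (𝓞 K) // Ideal.absNorm I = n} :=
        { toFun := fun I => ⟨I.1.1, I.2⟩
          invFun := fun I => ⟨⟨I.1, by
            intro h; apply hn; rw [← I.2, h]; simp⟩, I.2⟩
          left_inv := fun _ => rfl
          right_inv := fun _ => rfl }
      rw [← e.symm.tsum_eq]
      have := Fintype.ofFinite {I : Ideal (𝓞 K) // Ideal.absNorm I = n}
      rw [tsum_fintype]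
      simp only [b, hn, if_false, Finset.sum_const, Finset.card_univ, nsmul_eq_mul]
      rw [Nat.card_eq_fintype_card, ENNReal.ofReal_mul (by positivity)]
      simp
  refine ⟨by rw [hm]; exact ENNReal.ofReal_ne_top, ?_⟩
  rw [hL', hm, ENNReal.toReal_ofReal (tsum_nonneg hb0)]

open Filter Topology in
lemma mzeta_tendsto : Tendsto (fun s : ℝ => (s - 1) * (mzeta (pweight K s) ∅).toReal) (𝓝[>] 1)
    (𝓝 (dedekindZeta_residue K)) := by
  have ht := tendsto_sub_one_mul_dedekindZeta_nhdsGT K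
  have h2 : Tendsto (fun s : ℝ => (((s - 1) * (mzeta (pweight K s) ∅).toReal : ℝ) : ℂ)) (𝓝[>] 1)
    (𝓝 (dedekindZeta_residue K : ℂ)) := by
    refine ht.congr' ?_
    filter_upwards [mzeta_asymp K] with s hs
    rw [hs.2]; push_cast; rfl
  have := (Complex.continuous_re.tendsto _).comp h2
  simpa [Function.comp_def] using this

open Filter Topology in
/-- The analytic core. -/
theorem zeta_core (L : Type*) [Field L] [NumberField L]
    (T : Set (HeightOneSpectrum (𝓞 K))) (hT : T.Finite)
    (f₁ f₂ : HeightOneSpectrum (𝓞 K) → HeightOneSpectrum (𝓞 L))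
    (h₁ : Set.InjOn f₁ Tᶜ) (h₂ : Set.InjOn f₂ Tᶜ) (hd : ∀ x ∉ T, ∀ y ∉ T, f₁ x ≠ f₂ y)
    (hw₁ : ∀ x ∉ T, Ideal.absNorm (f₁ x).asIdeal = Ideal.absNorm x.asIdeal)
    (hw₂ : ∀ x ∉ T, Ideal.absNorm (f₂ x).asIdeal = Ideal.absNorm x.asIdeal) : False := by
  have hK := mzeta_tendsto K
  have hL := mzeta_tendsto L
  set c : ℝ := ((2 : ℝ) ^ T.ncard) ^ 2
  have hev : ∀ᶠ s : ℝ in 𝓝[>] 1, (mzeta (pweight K s) ∅).toReal ^ 2 ≤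
      c * (mzeta (pweight L s) ∅).toReal := by
    filter_upwards [mzeta_asymp K, mzeta_asymp L, self_mem_nhdsWithin] with s hsK hsL hs1
    obtain ⟨g1, g2⟩ := mzeta_finite (pweight K s) (pweight_le K s (le_of_lt hs1)) hsK.1 T hT
    have g3 := mzeta_sq_le (pweight K s) (pweight L s) T f₁ f₂ h₁ h₂ hd
      (fun x hx => by rw [pweight, pweight, hw₁ x hx]) (fun x hx => by rw [pweight, pweight, hw₂ x hx])
    have g4 := ENNReal.toReal_mono hsL.1 g3
    have g5 := ENNReal.toReal_mono (ENNReal.mul_ne_top (by simp) g2) g1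
    simp only [ENNReal.toReal_mul, ENNReal.toReal_pow, ENNReal.toReal_ofNat] at g4 g5
    calc (mzeta (pweight K s) ∅).toReal ^ 2 ≤ (2 ^ T.ncard * (mzeta (pweight K s) T).toReal) ^ 2 := by
          gcongr
      _ = c * ((mzeta (pweight K s) T).toReal * (mzeta (pweight K s) T).toReal) := by
          simp only [c]; ring
      _ ≤ _ := by gcongr
  have hl : Tendsto (fun s : ℝ => ((s - 1) * (mzeta (pweight K s) ∅).toReal) ^ 2) (𝓝[>] 1)
      (𝓝 (dedekindZeta_residue K ^ 2)) := hK.pow 2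
  have h0 : Tendsto (fun s : ℝ => (s - 1)) (𝓝[>] 1) (𝓝 0) := by
    have : Tendsto (fun s : ℝ => (s - 1)) (𝓝 1) (𝓝 (1 - 1)) := by
      exact (continuous_id.sub continuous_const).tendsto 1
    rw [sub_self] at this
    exact this.mono_left nhdsWithin_le_nhds
  have hr : Tendsto (fun s : ℝ => (s - 1) * (c * ((s - 1) * (mzeta (pweight L s) ∅).toReal))) (𝓝[>] 1)
      (𝓝 (0 * (c * dedekindZeta_residue L))) := h0.mul (hL.const_mul c)
  rw [zero_mul] at hr
  have hle := le_of_tendsto_of_tendsto hl hr (by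
    filter_upwards [hev] with s hs
    calc ((s - 1) * (mzeta (pweight K s) ∅).toReal) ^ 2
        = (s - 1) ^ 2 * (mzeta (pweight K s) ∅).toReal ^ 2 := by ring
      _ ≤ (s - 1) ^ 2 * (c * (mzeta (pweight L s) ∅).toReal) := by gcongr
      _ = _ := by ring)
  have := dedekindZeta_residue_pos K
  nlinarith [sq_pos_of_pos this]

end ZetaPart

open IsDedekindDomain NumberField

section FrobPart
open Pointwise

lemma coe_smul_gal {F L : Type*} [Field F] [Field L] [Algebra F L]
    (σ : Gal(L/F)) (x : 𝓞 L) : ((σ • x : 𝓞 L) : L) = σ (x : L) := rfl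

/-- conjugate of a prime -/
noncomputable def conjPrime {F L : Type*} [Field F] [Field L] [NumberField L] [Algebra F L]
    (σ : Gal(L/F)) (Q : HeightOneSpectrum (𝓞 L)) : HeightOneSpectrum (𝓞 L) where
  asIdeal := σ • Q.asIdeal
  isPrime := inferInstance
  ne_bot := by
    intro h
    obtain ⟨x, hx, hx0⟩ := Submodule.exists_mem_ne_zero_of_ne_bot Q.ne_bot
    have : σ • x ∈ σ • Q.asIdeal := Ideal.smul_mem_pointwise_smul_iff.2 hx
    rw [h, Ideal.mem_bot] at this
    exact hx0 ((smul_eq_zero_iff_eq σ).1 this)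

theorem frob_core (F L : Type*) [Field F] [NumberField F] [Field L] [NumberField L] [Algebra F L]
    [IsGalois F L] (σ : Gal(L/F)) (hσ : σ ≠ 1) (S : Set (HeightOneSpectrum (𝓞 F)))
    (hS : S.Finite) :
    ∃ P ∉ S, ∃ Q : HeightOneSpectrum (𝓞 L), Q.asIdeal.under (𝓞 F) = P.asIdeal ∧
      ∃ x : 𝓞 L, x ^ (Nat.card (𝓞 F ⧸ P.asIdeal)) - x ∉ Q.asIdeal := by
  by_contra! hcon
  -- an integer moved by σ
  obtain ⟨x, hx⟩ : ∃ x : 𝓞 L, σ • x ≠ x := by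
    by_contra! h
    apply hσ
    ext y
    obtain ⟨a, b, hb, rfl⟩ := IsFractionRing.div_surjective (A := 𝓞 L) y
    have ha := congrArg (algebraMap (𝓞 L) L) (h a)
    have hb := congrArg (algebraMap (𝓞 L) L) (h b)
    rw [map_div₀]
    exact congrArg₂ (· / ·) ha hb
  have hx' : Ideal.span {σ • x - x} ≠ 0 := by
    rw [Ne, Ideal.zero_eq_bot, Ideal.span_singleton_eq_bot]
    exact sub_ne_zero.2 hx
  let B : Set (HeightOneSpectrum (𝓞 L)) := {v | v.asIdeal ∣ Ideal.span {σ • x - x}}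
  have hB : B.Finite := Ideal.finite_factors hx'
  let T := S ∪ (HeightOneSpectrum.under (𝓞 F)) '' B
  have hT : T.Finite := hS.union (hB.image _)
  have hex : ∀ P : HeightOneSpectrum (𝓞 F), ∃ Q : HeightOneSpectrum (𝓞 L),
      Q.asIdeal.under (𝓞 F) = P.asIdeal := by
    intro P
    have := P.isMaximal
    obtain ⟨Q, hQ, hQ'⟩ := Ideal.exists_maximal_ideal_liesOver_of_isIntegral (S := 𝓞 L) P.asIdeal
    refine ⟨⟨Q, hQ.isPrime, ?_⟩, hQ'.over.symm⟩
    rintro rfl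
    apply P.ne_bot
    rw [hQ'.over]
    simp
  choose f hf using hex
  have key : ∀ P ∉ T, ∀ Q : HeightOneSpectrum (𝓞 L), Q.asIdeal.under (𝓞 F) = P.asIdeal →
      Function.Bijective (Ideal.quotientMap Q.asIdeal (algebraMap (𝓞 F) (𝓞 L))
        (le_of_eq (by rw [← Ideal.under_def] : Q.asIdeal.under (𝓞 F) = _))) := by
    intro P hP Q hQ
    have hPS : P ∉ S := fun h => hP (Or.inl h)
    have h1 := hcon P hPS Q hQ
    have hfin : Finite (𝓞 F ⧸ Q.asIdeal.under (𝓞 F)) := by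
      rw [hQ]; infer_instance
    have hinj : Function.Injective (Ideal.quotientMap Q.asIdeal (algebraMap (𝓞 F) (𝓞 L))
        (le_of_eq (by rw [← Ideal.under_def] : Q.asIdeal.under (𝓞 F) = _))) :=
      Ideal.quotientMap_injective
    have := Fintype.ofFinite (𝓞 F ⧸ Q.asIdeal.under (𝓞 F))
    have := Fintype.ofFinite (𝓞 L ⧸ Q.asIdeal)
    refine (Fintype.bijective_iff_injective_and_card _).2 ⟨hinj, ?_⟩
    apply le_antisymm (Fintype.card_le_of_injective _ hinj)
    have := Q.isMaximal
    let := Ideal.Quotient.field Q.asIdeal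
    have hcard : 1 < Nat.card (𝓞 F ⧸ P.asIdeal) := by
      have := HeightOneSpectrum.one_lt_absNorm P
      rwa [Ideal.absNorm_apply, Submodule.cardQuot_apply] at this
    rw [← Nat.card_eq_fintype_card, ← Nat.card_eq_fintype_card, hQ, Nat.card_eq_fintype_card (α := 𝓞 L ⧸ _)]
    set n := Nat.card (𝓞 F ⧸ P.asIdeal)
    have hdeg := FiniteField.X_pow_card_sub_X_natDegree_eq (𝓞 L ⧸ Q.asIdeal) hcard
    have hne := FiniteField.X_pow_card_sub_X_ne_zero (𝓞 L ⧸ Q.asIdeal) hcard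
    classical
    calc Fintype.card (𝓞 L ⧸ Q.asIdeal) ≤ (Polynomial.X ^ n - Polynomial.X :
          Polynomial (𝓞 L ⧸ Q.asIdeal)).roots.toFinset.card := by
          rw [← Finset.card_univ]
          apply Finset.card_le_card
          intro y _
          obtain ⟨y, rfl⟩ := Ideal.Quotient.mk_surjective y
          rw [Multiset.mem_toFinset, Polynomial.mem_roots hne]
          simp only [Polynomial.IsRoot.def, Polynomial.eval_sub, Polynomial.eval_pow,
            Polynomial.eval_X]
          rw [← map_pow, ← map_sub, Ideal.Quotient.eq_zero_iff_mem]
          exact h1 y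
      _ ≤ _ := Multiset.toFinset_card_le _
      _ ≤ _ := Polynomial.card_roots' _
      _ = n := hdeg
  have hnorm : ∀ P ∉ T, ∀ Q : HeightOneSpectrum (𝓞 L), Q.asIdeal.under (𝓞 F) = P.asIdeal →
      Ideal.absNorm Q.asIdeal = Ideal.absNorm P.asIdeal := by
    intro P hP Q hQ
    have := Nat.card_eq_of_bijective _ (key P hP Q hQ)
    rw [Ideal.absNorm_apply, Submodule.cardQuot_apply, Ideal.absNorm_apply,
      Submodule.cardQuot_apply, ← this, hQ]
  have hunder : ∀ Q : HeightOneSpectrum (𝓞 L),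
      (conjPrime σ Q).asIdeal.under (𝓞 F) = Q.asIdeal.under (𝓞 F) := by
    intro Q
    exact Ideal.under_smul _ _ _
  refine zeta_core F L T hT f (fun P => conjPrime σ (f P)) ?_ ?_ ?_ ?_ ?_
  · intro P _ P' _ h
    apply HeightOneSpectrum.ext
    rw [← hf, ← hf, h]
  · intro P _ P' _ h
    apply HeightOneSpectrum.ext
    rw [← hf, ← hf, ← hunder, ← hunder (f P')]
    simp only at h
    rw [h]
  · intro P hP P' hP' h
    have hPP : P = P' := by
      apply HeightOneSpectrum.ext
      rw [← hf, ← hf, h, hunder]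
    subst hPP
    have hst : σ • (f P).asIdeal = (f P).asIdeal := congrArg HeightOneSpectrum.asIdeal h.symm
    apply hP
    refine Or.inr ⟨f P, ?_, HeightOneSpectrum.ext (hf P)⟩
    change (f P).asIdeal ∣ _
    rw [Ideal.dvd_span_singleton]
    obtain ⟨z, hz⟩ := (key P hP (f P) (hf P)).2 (Ideal.Quotient.mk _ x)
    obtain ⟨z, rfl⟩ := Ideal.Quotient.mk_surjective z
    rw [Ideal.quotientMap_mk, Ideal.Quotient.eq] at hz
    have h2 : σ • (algebraMap (𝓞 F) (𝓞 L) z - x) ∈ (f P).asIdeal := by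
      rw [← hst]
      exact Ideal.smul_mem_pointwise_smul_iff.2 hz
    rw [smul_sub, smul_algebraMap] at h2
    have := (f P).asIdeal.sub_mem hz h2
    convert this using 1
    ring
  · intro P hP
    exact hnorm P hP _ (hf P)
  · intro P hP
    exact hnorm P hP _ (by rw [hunder, hf])

end FrobPart

open IsDedekindDomain NumberField

section KummerPart
open Pointwise

lemma root_unity_eq_one {R : Type*} [CommRing R] [IsDomain R] (Q : Ideal R) {q : ℕ}
    (hq : (q : R) ∉ Q) {η : R} (hη : η ^ q = 1) (h : η - 1 ∈ Q) : η = 1 := by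
  by_contra hne
  apply hq
  have h1 : (∑ i ∈ Finset.range q, η ^ i) * (η - 1) = 0 := by
    rw [geom_sum_mul, hη, sub_self]
  have h2 : (∑ i ∈ Finset.range q, η ^ i) = 0 :=
    (mul_eq_zero.1 h1).resolve_right (sub_ne_zero.2 hne)
  rw [← Ideal.Quotient.eq_zero_iff_mem]
  have h3 : Ideal.Quotient.mk Q η = 1 := by
    rw [← map_one (Ideal.Quotient.mk Q), Ideal.Quotient.eq]; exact h
  have h4 := congrArg (Ideal.Quotient.mk Q) h2
  rw [map_sum] at h4
  simpa [h3] using h4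

lemma exists_root_of_pow_eq {R : Type*} [CommRing R] [IsDomain R] {q : ℕ} (hq : 0 < q) {ζ : R}
    (hζ : IsPrimitiveRoot ζ q) (Q : Ideal R) [Q.IsPrime] {a b : R} (h : a ^ q - b ^ q ∈ Q) :
    ∃ ξ : R, ξ ^ q = 1 ∧ a - ξ * b ∈ Q := by
  rw [hζ.pow_sub_pow_eq_prod_sub_mul a b hq] at h
  obtain ⟨ξ, hξ, h2⟩ := (Ideal.IsPrime.prod_mem_iff).1 h
  exact ⟨ξ, (Polynomial.mem_nthRootsFinset hq _).1 hξ, h2⟩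

theorem kummer_core {F K : Type*} [Field F] [NumberField F] [Field K] [NumberField K] [Algebra F K]
    [IsGalois F K] {q : ℕ} (hq : 0 < q) {ζ : 𝓞 K} (hζ : IsPrimitiveRoot ζ q)
    {ε : 𝓞 F} {β : 𝓞 K} (hβ : β ^ q = algebraMap (𝓞 F) (𝓞 K) ε)
    (Q : Ideal (𝓞 K)) [Q.IsPrime] [Finite (𝓞 F ⧸ Q.under (𝓞 F))]
    (hqQ : (q : 𝓞 K) ∉ Q)
    (hε : ε ∉ Q.under (𝓞 F)) {y : 𝓞 F} (hy : y ^ q - ε ∈ Q.under (𝓞 F))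
    (φ : Gal(K/F)) (hφ : IsArithFrobAt (𝓞 F) φ Q) :
    ∃ ξ : 𝓞 K, ξ ^ q = 1 ∧ φ • (ξ * β) = ξ * β := by
  set a := algebraMap (𝓞 F) (𝓞 K)
  have hy' : (a y) ^ q - β ^ q ∈ Q := by
    rw [hβ, ← map_pow, ← map_sub]; exact hy
  obtain ⟨ξ, hξ, h1⟩ := exists_root_of_pow_eq hq hζ Q hy'
  refine ⟨ξ, hξ, ?_⟩
  set β' := ξ * β
  have hβ' : β' ^ q = a ε := by rw [mul_pow, hξ, one_mul, hβ]
  have hyN : (a y) ^ (Nat.card (𝓞 F ⧸ Q.under (𝓞 F))) - a y ∈ Q := by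
    rw [← map_pow, ← map_sub]
    change _ ∈ Q.under (𝓞 F)
    have : (Q.under (𝓞 F)).IsMaximal :=
      Ideal.Quotient.maximal_of_isField _ (Finite.isField_of_domain _)
    let := Ideal.Quotient.field (Q.under (𝓞 F))
    have := Fintype.ofFinite (𝓞 F ⧸ Q.under (𝓞 F))
    rw [← Ideal.Quotient.eq_zero_iff_mem, map_sub, map_pow, Nat.card_eq_fintype_card,
      FiniteField.pow_card, sub_self]
  have hfr : φ • β' - β' ^ (Nat.card (𝓞 F ⧸ Q.under (𝓞 F))) ∈ Q := hφ β'
  have h5 : φ • β' - β' ∈ Q := by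
    rw [← Ideal.Quotient.eq_zero_iff_mem] at *
    simp only [map_sub, map_pow] at *
    rw [sub_eq_zero] at *
    rw [hfr, ← h1, hyN]
  have h6 : (φ • β') ^ q - β' ^ q ∈ (⊥ : Ideal (𝓞 K)) := by
    rw [← smul_pow', hβ', smul_algebraMap, sub_self]; exact Ideal.zero_mem _
  obtain ⟨η, hη, h7⟩ := exists_root_of_pow_eq hq hζ (⊥ : Ideal (𝓞 K)) h6
  rw [Ideal.mem_bot, sub_eq_zero] at h7
  have h8 : (η - 1) * β' ∈ Q := by rw [sub_mul, one_mul, ← h7]; exact h5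
  have h9 : β' ∉ Q := by
    intro h
    apply hε
    have := Ideal.pow_mem_of_mem Q h q hq
    rw [hβ'] at this
    exact this
  have h10 := root_unity_eq_one Q hqQ hη ((Ideal.IsPrime.mem_or_mem ‹_› h8).resolve_right h9)
  rw [h7, h10, one_mul]

lemma finite_primes_mem {F : Type*} [Field F] [NumberField F] {x : 𝓞 F} (hx : x ≠ 0) :
    {v : HeightOneSpectrum (𝓞 F) | x ∈ v.asIdeal}.Finite := by
  have := Ideal.finite_factors (R := 𝓞 F) (I := Ideal.span {x}) (by
    rw [Ne, Ideal.zero_eq_bot, Ideal.span_singleton_eq_bot]; exact hx)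
  simpa only [Ideal.dvd_span_singleton] using this

/-- `ε` is a `q`-th power modulo almost all primes -/
def LocPow (F : Type*) [Field F] (q : ℕ) (ε : 𝓞 F) : Prop :=
  {v : HeightOneSpectrum (𝓞 F) | ¬ ∃ y : 𝓞 F, y ^ q - ε ∈ v.asIdeal}.Finite

lemma exists_int_root {K : Type*} [Field K] {q : ℕ} (hq : 0 < q) {ε : 𝓞 K} {b : K}
    (hb : b ^ q = ε) : ∃ β : 𝓞 K, (β : K) = b ∧ β ^ q = ε := by
  have : IsIntegral ℤ b := IsIntegral.of_pow hq (by rw [hb]; exact ε.2)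
  refine ⟨⟨b, this⟩, rfl, ?_⟩
  apply RingOfIntegers.ext
  exact hb

lemma exists_int_prim {K : Type*} [Field K] {q : ℕ} (hq : 0 < q) {ζ : K}
    (hζ : IsPrimitiveRoot ζ q) : ∃ z : 𝓞 K, (z : K) = ζ ∧ IsPrimitiveRoot z q := by
  obtain ⟨z, hz, -⟩ := exists_int_root hq (ε := (1 : 𝓞 K)) (b := ζ) (by simpa using hζ.pow_eq_one)
  refine ⟨z, hz, IsPrimitiveRoot.of_map_of_injective (f := algebraMap (𝓞 K) K) ?_
    RingOfIntegers.coe_injective⟩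
  exact (show IsPrimitiveRoot (z : K) q from hz ▸ hζ)

lemma gal_fixed_int {F K : Type*} [Field F] [NumberField F] [Field K] [NumberField K] [Algebra F K]
    [IsGalois F K] {q : ℕ} (hq : 0 < q) {ε : 𝓞 F} {β : 𝓞 K}
    (hβ : β ^ q = algebraMap (𝓞 F) (𝓞 K) ε) (h : ∀ σ : Gal(K/F), σ • β = β) :
    ∃ γ : 𝓞 F, γ ^ q = ε := by
  obtain ⟨c, hc⟩ := (IsGalois.mem_range_algebraMap_iff_fixed (F := F) (β : K)).2 (fun σ => by
    rw [← coe_smul_gal, h σ])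
  have : c ^ q = (ε : F) := by
    apply (algebraMap F K).injective
    rw [map_pow, hc]
    have := congrArg (fun z : 𝓞 K => (z : K)) hβ
    simp only [map_pow] at this
    rw [this]
    rfl
  obtain ⟨γ, -, hγ⟩ := exists_int_root hq this
  exact ⟨γ, hγ⟩

lemma frob_good {F K : Type*} [Field F] [NumberField F] [Field K] [NumberField K] [Algebra F K]
    [IsGalois F K] {q : ℕ} (hq : 0 < q) {ζ : 𝓞 K} (hζ : IsPrimitiveRoot ζ q)
    {ε : 𝓞 F} (P : HeightOneSpectrum (𝓞 F)) (Q : HeightOneSpectrum (𝓞 K))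
    (hQP : Q.asIdeal.under (𝓞 F) = P.asIdeal)
    (hP1 : (q : 𝓞 F) ∉ P.asIdeal) (hP2 : ε ∉ P.asIdeal)
    (hP3 : ∃ y : 𝓞 F, y ^ q - ε ∈ P.asIdeal) :
    ∃ φ : Gal(K/F), (∀ x : 𝓞 K, φ • x - x ^ (Nat.card (𝓞 F ⧸ P.asIdeal)) ∈ Q.asIdeal) ∧
      ∀ β : 𝓞 K, β ^ q = algebraMap (𝓞 F) (𝓞 K) ε →
      ∃ ξ : 𝓞 K, ξ ^ q = 1 ∧ φ • (ξ * β) = ξ * β := by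
  obtain ⟨φ, hφ⟩ := IsArithFrobAt.exists_of_isInvariant (𝓞 F) Gal(K/F) Q.asIdeal
  obtain ⟨y, hy⟩ := hP3
  refine ⟨φ, ?_, ?_⟩
  · intro x
    rw [← hQP]
    exact hφ x
  · intro β hβ
    have : Finite (𝓞 F ⧸ Q.asIdeal.under (𝓞 F)) := by rw [hQP]; infer_instance
    refine kummer_core hq hζ hβ Q.asIdeal ?_ (by rwa [hQP]) (by rwa [hQP]) φ hφ
    intro h
    apply hP1
    rw [← hQP, Ideal.mem_comap]
    simpa using h

/-- Step 1: if `F` contains the `q`-th roots of unity. -/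
theorem step1 {F : Type*} [Field F] [NumberField F] {q : ℕ} (hq : 0 < q) {ζ : F}
    (hζ : IsPrimitiveRoot ζ q) {ε : 𝓞 F} (hε : ε ≠ 0) (hloc : LocPow F q ε) :
    ∃ γ : 𝓞 F, γ ^ q = ε := by
  let f : Polynomial F := Polynomial.X ^ q - Polynomial.C (ε : F)
  let L := f.SplittingField
  have hε' : (ε : F) ≠ 0 := by simpa using hε
  have hsep : f.Separable := Polynomial.separable_X_pow_sub_C _ (by exact_mod_cast hq.ne') hε'
  have : IsGalois F L := IsGalois.of_separable_splitting_field hsep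
  have : NumberField L := NumberField.of_module_finite F L
  obtain ⟨z0, hz0, hz0p⟩ := exists_int_prim hq hζ
  have hz : IsPrimitiveRoot (algebraMap (𝓞 F) (𝓞 L) z0) q :=
    hz0p.map_of_injective (FaithfulSMul.algebraMap_injective (𝓞 F) (𝓞 L))
  have hdeg : f.degree ≠ 0 := by
    rw [Polynomial.degree_X_pow_sub_C hq]; exact_mod_cast hq.ne'
  have hspl : (f.map (algebraMap F L)).Splits := Polynomial.SplittingField.splits f
  obtain ⟨b, hb⟩ := Polynomial.Splits.exists_eval_eq_zero hspl (by
    rwa [Polynomial.degree_map])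
  have hb' : b ^ q = ((algebraMap (𝓞 F) (𝓞 L) ε : 𝓞 L) : L) := by
    simp only [f, Polynomial.map_sub, Polynomial.map_pow, Polynomial.map_X, Polynomial.map_C,
      Polynomial.eval_sub, Polynomial.eval_pow, Polynomial.eval_X, Polynomial.eval_C] at hb
    rw [sub_eq_zero.1 hb]; rfl
  obtain ⟨β, hβb, hβ⟩ := exists_int_root hq hb'
  by_cases htriv : ∀ σ : Gal(L/F), σ = 1
  · exact gal_fixed_int hq hβ (fun σ => by rw [htriv σ, one_smul])
  exfalso
  push Not at htriv
  obtain ⟨σ, hσ⟩ := htriv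
  obtain ⟨P, hP, Q, hQP, x, hx⟩ := frob_core F L σ hσ
    ({v : HeightOneSpectrum (𝓞 F) | ¬ ∃ y : 𝓞 F, y ^ q - ε ∈ v.asIdeal} ∪
      ({v | (q : 𝓞 F) ∈ v.asIdeal} ∪ {v | ε ∈ v.asIdeal}))
    (hloc.union ((finite_primes_mem (by exact_mod_cast hq.ne')).union (finite_primes_mem hε)))
  simp only [Set.mem_union, Set.mem_setOf_eq, not_or, not_not] at hP
  obtain ⟨φ, hφ, hφ2⟩ := frob_good hq hz P Q hQP hP.2.1 hP.2.2 hP.1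
  have hfix : ∀ β : 𝓞 L, β ^ q = algebraMap (𝓞 F) (𝓞 L) ε → φ • β = β := by
    intro β hβ
    obtain ⟨ξ, hξ, h⟩ := hφ2 β hβ
    have : NeZero q := ⟨hq.ne'⟩
    obtain ⟨i, -, rfl⟩ := hz.eq_pow_of_pow_eq_one hξ
    rw [smul_mul', ← map_pow, smul_algebraMap] at h
    refine mul_left_cancel₀ ?_ h
    rw [map_pow]
    exact pow_ne_zero _ (hz.ne_zero hq.ne')
  have hφ1 : φ = 1 := by
    have h1 : (φ : L →ₐ[F] L) = AlgHom.id F L := by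
      apply AlgHom.ext_of_adjoin_eq_top (s := f.rootSet L) (Polynomial.SplittingField.adjoin_rootSet f)
      intro c hc
      have hc0 := (Polynomial.mem_rootSet.1 hc).2
      have hc' : c ^ q = ((algebraMap (𝓞 F) (𝓞 L) ε : 𝓞 L) : L) := by
        simp only [f, map_sub, map_pow, Polynomial.aeval_X, Polynomial.aeval_C] at hc0
        rw [sub_eq_zero.1 hc0]; rfl
      obtain ⟨γ, hγc, hγ⟩ := exists_int_root hq hc'
      rw [← hγc]
      exact congrArg (fun z : 𝓞 L => (z : L)) (hfix γ hγ)
    ext y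
    exact DFunLike.congr_fun h1 y
  apply hx
  have := hφ x
  rw [hφ1, one_smul] at this
  have := neg_mem this
  rwa [neg_sub] at this

/-- Step 2: descent along a cyclic `p`-extension. -/
theorem step2 {F K : Type*} [Field F] [NumberField F] [Field K] [NumberField K] [Algebra F K]
    [IsGalois F K] {q : ℕ} (hq : 0 < q) {ζ : K} (hζ : IsPrimitiveRoot ζ q)
    {ε : 𝓞 F} (hε : ε ≠ 0) (hloc : LocPow F q ε) {β : 𝓞 K}
    (hβ : β ^ q = algebraMap (𝓞 F) (𝓞 K) ε) {p : ℕ} (hp : p.Prime) (hpG : IsPGroup p Gal(K/F))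
    (hcyc : IsCyclic Gal(K/F)) : ∃ γ : 𝓞 F, γ ^ q = ε := by
  obtain ⟨z, hz, hzp⟩ := exists_int_prim hq hζ
  obtain ⟨g, hg⟩ := hcyc.exists_generator
  by_cases hg1 : g = 1
  · refine gal_fixed_int hq hβ fun σ => ?_
    have := hg σ
    rw [hg1, Subgroup.zpowers_one_eq_bot, Subgroup.mem_bot] at this
    rw [this, one_smul]
  have : Fact p.Prime := ⟨hp⟩
  obtain ⟨n, hn⟩ := (IsPGroup.iff_orderOf.1 hpG) g
  have hn0 : n ≠ 0 := by
    rintro rfl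
    rw [pow_zero, orderOf_eq_one_iff] at hn
    exact hg1 hn
  let H : Subgroup Gal(K/F) := Subgroup.zpowers (g ^ p)
  have hHiff : ∀ j : ℤ, (p : ℤ) ∣ j → g ^ j ∈ H := by
    rintro j ⟨i, rfl⟩
    rw [zpow_mul, zpow_natCast]
    exact Subgroup.zpow_mem_zpowers _ _
  have hgH : g ∉ H := by
    rintro ⟨i, hi⟩
    have hi : (g ^ p) ^ i = g := hi
    rw [← zpow_natCast, ← zpow_mul] at hi
    have h1 : g ^ ((p : ℤ) * i - 1) = 1 := by rw [zpow_sub, hi, zpow_one, mul_inv_cancel]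
    rw [← orderOf_dvd_iff_zpow_eq_one, hn] at h1
    have h2 : (p : ℤ) ∣ (p : ℤ) * i - 1 := dvd_trans (by push_cast; exact dvd_pow_self _ hn0) h1
    have h3 : (p : ℤ) ∣ 1 := by
      have := dvd_sub (dvd_mul_right (p : ℤ) i) h2
      simpa using this
    exact hp.one_lt.ne' (by exact_mod_cast Int.eq_one_of_dvd_one (by positivity) h3)
  have hcomm : ∀ a b : Gal(K/F), a * b = b * a := hcyc.commGroup.mul_comm
  have hN : H.Normal := ⟨fun a ha b => by rwa [hcomm b a, mul_inv_cancel_right]⟩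
  let L := IntermediateField.fixedField H
  have hLgal : IsGalois F L := IsGalois.of_fixedField_normal_subgroup H
  have hfix : ∀ τ : Gal(K/F), (∀ x : L, τ x = x) → τ ∈ H := by
    intro τ hτ
    rw [← IntermediateField.fixingSubgroup_fixedField H, IntermediateField.mem_fixingSubgroup_iff]
    exact fun x hx => hτ ⟨x, hx⟩
  let σ : Gal(L/F) := AlgEquiv.restrictNormalHom L g
  have hσ : σ ≠ 1 := by
    intro h
    apply hgH
    apply hfix
    intro x
    have := AlgEquiv.restrictNormal_commutes g L x
    change ((σ x : L) : K) = g x at this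
    rw [h] at this
    exact this.symm
  obtain ⟨P, hP, QL, hQLP, x, hx⟩ := frob_core F L σ hσ
    ({v : HeightOneSpectrum (𝓞 F) | ¬ ∃ y : 𝓞 F, y ^ q - ε ∈ v.asIdeal} ∪
      ({v | (q : 𝓞 F) ∈ v.asIdeal} ∪ {v | ε ∈ v.asIdeal}))
    (hloc.union ((finite_primes_mem (by exact_mod_cast hq.ne')).union (finite_primes_mem hε)))
  simp only [Set.mem_union, Set.mem_setOf_eq, not_or, not_not] at hP
  have hQ : ∃ Q : HeightOneSpectrum (𝓞 K), Q.asIdeal.under (𝓞 L) = QL.asIdeal := by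
    have := QL.isMaximal
    obtain ⟨Q, hQ, hQ'⟩ := Ideal.exists_maximal_ideal_liesOver_of_isIntegral (S := 𝓞 K) QL.asIdeal
    refine ⟨⟨Q, hQ.isPrime, ?_⟩, hQ'.over.symm⟩
    rintro rfl
    apply QL.ne_bot
    rw [hQ'.over]
    simp
  obtain ⟨Q, hQ⟩ := hQ
  have hQP : Q.asIdeal.under (𝓞 F) = P.asIdeal := by
    rw [← hQLP, ← hQ, Ideal.under_under]
  obtain ⟨φ, hφ, hφ2⟩ := frob_good hq hzp P Q hQP hP.2.1 hP.2.2 hP.1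
  obtain ⟨j, hj⟩ := hg φ
  have hj : g ^ j = φ := hj
  have hpj : ¬ (p : ℤ) ∣ j := by
    intro h
    have hH := hHiff j h
    rw [hj] at hH
    have h2 := hφ (algebraMap (𝓞 L) (𝓞 K) x)
    have h3 : φ • (algebraMap (𝓞 L) (𝓞 K) x) = algebraMap (𝓞 L) (𝓞 K) x := by
      apply RingOfIntegers.ext
      exact (x : L).2 ⟨φ, hH⟩
    rw [h3, ← map_pow, ← map_sub] at h2
    apply hx
    rw [← hQ, Ideal.mem_comap]
    have := neg_mem h2
    rwa [← map_neg, neg_sub] at this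
  have hgen : ∀ τ : Gal(K/F), τ ∈ Subgroup.zpowers φ := by
    have hcop : IsCoprime ((p : ℤ) ^ n) j := by
      apply IsCoprime.pow_left
      exact (Int.isCoprime_iff_gcd_eq_one).2 ((Nat.Coprime.gcd_eq_one
        ((Nat.Prime.coprime_iff_not_dvd hp).2 (by
          rwa [Int.natCast_dvd] at hpj))))
    obtain ⟨a, b, hab⟩ := hcop
    have hgφ : g ∈ Subgroup.zpowers φ := by
      refine ⟨b, ?_⟩
      change φ ^ b = g
      rw [← hj, ← zpow_mul, mul_comm, show b * j = 1 - a * (p : ℤ) ^ n by linarith, zpow_sub,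
        mul_comm a, zpow_mul]
      have : g ^ ((p : ℤ) ^ n) = 1 := by
        have := pow_orderOf_eq_one g
        rw [hn] at this
        exact_mod_cast this
      rw [this]; simp
    intro τ
    obtain ⟨i, rfl⟩ := hg τ
    exact Subgroup.zpow_mem _ hgφ i
  obtain ⟨ξ, hξ, hfixβ⟩ := hφ2 β hβ
  refine gal_fixed_int (β := ξ * β) hq (by rw [mul_pow, hξ, one_mul, hβ]) fun τ => ?_
  have : Subgroup.zpowers φ ≤ MulAction.stabilizer Gal(K/F) (ξ * β) := by
    rw [Subgroup.zpowers_le]; exact hfixβ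
  exact this (hgen τ)

end KummerPart

open IsDedekindDomain NumberField

section Z3

lemma approx_int {k : Type*} [Field k] [NumberField k] (v : HeightOneSpectrum (𝓞 k))
    (z : v.adicCompletion k) (hz : Valued.v z ≤ 1) :
    ∃ a : 𝓞 k, Valued.v (algebraMap k (v.adicCompletion k) (algebraMap (𝓞 k) k a) - z) < 1 := by
  have hopen : IsOpen ((fun x : v.adicCompletion k => x - z) ⁻¹' {x | Valued.v x < 1}) := by
    refine IsOpen.preimage (by fun_prop) ?_
    simpa only [Valuation.restrict_lt_one_iff] using Valued.isOpen_ball (v.adicCompletion k) 1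
  obtain ⟨x, hx⟩ := (v.denseRange_algebraMap k).exists_mem_open hopen ⟨z, by simp⟩
  have hx' : Valued.v (algebraMap k (v.adicCompletion k) x - z) < 1 := hx
  have hx1 : Valued.v (algebraMap k (v.adicCompletion k) x) ≤ 1 := by
    have : algebraMap k (v.adicCompletion k) x = (algebraMap k (v.adicCompletion k) x - z) + z := by ring
    rw [this]
    exact (Valuation.map_add _ _ _).trans (max_le hx'.le hz)
  have h2 : v.valuation k x ≤ 1 := by
    rw [← v.valuedAdicCompletion_eq_valuation' (K := k) x]; exact hx1
  obtain ⟨a, ha⟩ := v.exists_valuation_sub_lt_of_integer h2 1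
  refine ⟨a, ?_⟩
  rw [← v.valuedAdicCompletion_eq_valuation' (K := k)] at ha
  have ha' : Valued.v (algebraMap k (v.adicCompletion k) (algebraMap (𝓞 k) k a - x)) < 1 := ha
  have : algebraMap k (v.adicCompletion k) (algebraMap (𝓞 k) k a) - z =
    algebraMap k (v.adicCompletion k) (algebraMap (𝓞 k) k a - x) +
      (algebraMap k (v.adicCompletion k) x - z) := by rw [map_sub]; ring
  rw [this]
  exact (Valuation.map_add _ _ _).trans_lt (max_lt ha' hx')

lemma locPow_of_completion {k : Type*} [Field k] [NumberField k] {e q : ℕ} (hqe : q ∣ e) (he : e ≠ 0)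
    (ε : 𝓞 k)
    (hε : {v : HeightOneSpectrum (𝓞 k) |
        ¬ ∃ y : v.adicCompletion k,
            y ^ e = algebraMap k (v.adicCompletion k) (algebraMap (𝓞 k) k (ε : 𝓞 k))}.Finite) :
    LocPow k q ε := by
  refine hε.subset ?_
  intro v hv
  simp only [Set.mem_ofPred_eq] at hv ⊢
  contrapose! hv
  obtain ⟨y, hy⟩ := hv
  obtain ⟨m, rfl⟩ := hqe
  have hm : m ≠ 0 := by rintro rfl; simp at he
  have hq : q ≠ 0 := by rintro rfl; simp at he
  set z := y ^ m with hz
  have hzq : z ^ q = algebraMap k (v.adicCompletion k) (algebraMap (𝓞 k) k (ε : 𝓞 k)) := by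
    rw [hz, ← pow_mul, mul_comm, hy]
  have hle : Valued.v (algebraMap k (v.adicCompletion k) (algebraMap (𝓞 k) k (ε : 𝓞 k))) ≤ 1 := by
    have := v.valuedAdicCompletion_eq_valuation' (K := k) (algebraMap (𝓞 k) k (ε : 𝓞 k))
    erw [this]
    exact v.valuation_le_one ε
  have hz1 : Valued.v z ≤ 1 := by
    rw [← hzq, map_pow] at hle
    exact (pow_le_one_iff hq).1 hle
  obtain ⟨a, ha⟩ := approx_int v z hz1
  refine ⟨a, ?_⟩
  have ha1 : Valued.v (algebraMap k (v.adicCompletion k) (algebraMap (𝓞 k) k a)) ≤ 1 := by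
    have := v.valuedAdicCompletion_eq_valuation' (K := k) (algebraMap (𝓞 k) k a)
    erw [this]
    exact v.valuation_le_one a
  have key : Valued.v (algebraMap k (v.adicCompletion k) (algebraMap (𝓞 k) k (a ^ q - ε))) < 1 := by
    rw [map_sub, map_sub, ← hzq, map_pow, map_pow, ← (Commute.all _ z).geom_sum₂_mul, map_mul]
    refine mul_lt_one_of_nonneg_of_lt_one_right ?_ zero_le ha
    refine Valuation.map_sum_le _ ?_
    intro i _
    rw [map_mul, map_pow, map_pow]
    exact mul_le_one' (pow_le_one' ha1 _) (pow_le_one' hz1 _)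
  have := v.valuedAdicCompletion_eq_valuation' (K := k) (algebraMap (𝓞 k) k (a ^ q - ε))
  erw [this] at key
  exact (v.valuation_lt_one_iff_mem _).1 key

lemma locPow_lift {k F : Type*} [Field k] [NumberField k] [Field F] [NumberField F] [Algebra k F]
    {q : ℕ} {ε : 𝓞 k} (h : LocPow k q ε) : LocPow F q (algebraMap (𝓞 k) (𝓞 F) ε) := by
  have hfin : ({w : HeightOneSpectrum (𝓞 F) | ∃ v ∈ {v : HeightOneSpectrum (𝓞 k) |
      ¬ ∃ y : 𝓞 k, y ^ q - ε ∈ v.asIdeal}, w.asIdeal.under (𝓞 k) = v.asIdeal}).Finite := by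
    have : {w : HeightOneSpectrum (𝓞 F) | ∃ v ∈ {v : HeightOneSpectrum (𝓞 k) |
      ¬ ∃ y : 𝓞 k, y ^ q - ε ∈ v.asIdeal}, w.asIdeal.under (𝓞 k) = v.asIdeal} =
      ⋃ v ∈ {v : HeightOneSpectrum (𝓞 k) |
      ¬ ∃ y : 𝓞 k, y ^ q - ε ∈ v.asIdeal}, {w : HeightOneSpectrum (𝓞 F) | w.asIdeal.under (𝓞 k) = v.asIdeal} := by
      ext; simp
    rw [this]
    refine Set.Finite.biUnion h ?_
    intro v _
    obtain ⟨x, hx, hx0⟩ := Submodule.exists_mem_ne_zero_of_ne_bot v.ne_bot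
    refine (finite_primes_mem (x := algebraMap (𝓞 k) (𝓞 F) x) ?_).subset ?_
    · rwa [Ne, FaithfulSMul.algebraMap_eq_zero_iff]
    · intro w hw
      have : x ∈ w.asIdeal.under (𝓞 k) := by
        rw [show w.asIdeal.under (𝓞 k) = v.asIdeal from hw]; exact hx
      exact this
  refine hfin.subset ?_
  intro w hw
  refine ⟨w.under (𝓞 k), ?_, rfl⟩
  rintro ⟨y, hy⟩
  apply hw
  refine ⟨algebraMap _ _ y, ?_⟩
  have : algebraMap (𝓞 k) (𝓞 F) (y ^ q - ε) ∈ w.asIdeal := hy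
  simpa using this

end Z3

open IsDedekindDomain NumberField

section Z4

lemma exists_fixed {k K : Type*} [Field k] [NumberField k] [Field K] [NumberField K] [Algebra k K]
    [IsGalois k K] {q : ℕ} (hq : 0 < q) {ζ : K} (hζ : IsPrimitiveRoot ζ q) {ε : 𝓞 k} (hε : ε ≠ 0)
    (hloc : LocPow k q ε) {p : ℕ} (hp : p.Prime) (D : Subgroup Gal(K/k)) (hpG : IsPGroup p D)
    (hcyc : IsCyclic D) :
    ∃ γ : K, γ ^ q = algebraMap k K ε ∧ ∀ σ ∈ D, σ γ = γ := by
  let F := IntermediateField.fixedField D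
  have hεK : algebraMap (𝓞 k) (𝓞 K) ε ≠ 0 := by rwa [Ne, FaithfulSMul.algebraMap_eq_zero_iff]
  have hεF : algebraMap (𝓞 k) (𝓞 F) ε ≠ 0 := by rwa [Ne, FaithfulSMul.algebraMap_eq_zero_iff]
  obtain ⟨β, hβ⟩ := step1 hq hζ hεK (locPow_lift hloc)
  let E := IntermediateField.subgroupEquivAlgEquiv D
  have hβ' : β ^ q = algebraMap (𝓞 F) (𝓞 K) (algebraMap (𝓞 k) (𝓞 F) ε) := by
    rw [hβ]
    rfl
  obtain ⟨γ, hγ⟩ := step2 (F := F) (K := K) hq hζ hεF (locPow_lift hloc) hβ' hp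
    (hpG.of_equiv E) (isCyclic_of_surjective E E.surjective)
  refine ⟨((γ : F) : K), ?_, ?_⟩
  · have := congrArg (fun x : 𝓞 F => ((x : F) : K)) hγ
    exact this
  · intro σ hσ
    exact (γ : F).2 ⟨σ, hσ⟩

lemma unit_ne_zero_pow {E : Type*} [Field E] {a : E} (ha : a ≠ 0) {m n : ℕ} (h : Nat.Coprime m n)
    {x : E} (hx : x ^ m = a ^ n) : ∃ z, z ^ m = a := by
  have hb := Nat.gcd_eq_gcd_ab m n
  rw [h.gcd_eq_one] at hb
  rcases Nat.eq_zero_or_pos m with rfl | hm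
  · simp at h; subst h
    exact ⟨0, by simpa using hx⟩
  have hx0 : x ≠ 0 := by
    rintro rfl
    rw [zero_pow hm.ne'] at hx
    exact pow_ne_zero _ ha hx.symm
  refine ⟨a ^ (Nat.gcdA m n) * x ^ (Nat.gcdB m n), ?_⟩
  rw [mul_pow, ← zpow_natCast, ← zpow_natCast, ← zpow_mul, ← zpow_mul, mul_comm _ (m : ℤ), mul_comm _ (m : ℤ), zpow_mul x,
    zpow_natCast x, hx, ← zpow_natCast, ← zpow_mul, ← zpow_add₀ ha, ← hb]
  simp

lemma pow_of_coprime {E : Type*} [Field E] {a : E} (ha : a ≠ 0) {m n : ℕ} (h : Nat.Coprime m n)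
    (hm : ∃ x, x ^ m = a) (hn : ∃ x, x ^ n = a) : ∃ z, z ^ (m * n) = a := by
  obtain ⟨x, hx⟩ := hm
  obtain ⟨y, hy⟩ := hn
  have hb := Nat.gcd_eq_gcd_ab m n
  rw [h.gcd_eq_one] at hb
  refine ⟨x ^ (Nat.gcdB m n) * y ^ (Nat.gcdA m n), ?_⟩
  have h1 : (x ^ (Nat.gcdB m n)) ^ (m * n) = a ^ (n * Nat.gcdB m n) := by
    rw [← hx, ← zpow_natCast x m, ← zpow_mul, ← zpow_natCast, ← zpow_mul]
    congr 1; push_cast; ring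
  have h2 : (y ^ (Nat.gcdA m n)) ^ (m * n) = a ^ (m * Nat.gcdA m n) := by
    rw [← hy, ← zpow_natCast y n, ← zpow_mul, ← zpow_natCast, ← zpow_mul]
    congr 1; push_cast; ring
  rw [mul_pow, h1, h2, ← zpow_add₀ ha, add_comm, ← hb, Nat.cast_one, zpow_one]

/-- odd prime powers -/
lemma odd_primepow {k : Type*} [Field k] [NumberField k] {p a : ℕ} (hp : p.Prime) (hp2 : p ≠ 2)
    {ε : 𝓞 k} (hε : ε ≠ 0) (hloc : LocPow k (p ^ a) ε) : ∃ x : k, x ^ (p ^ a) = ε := by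
  have := Fact.mk hp
  have hq : 0 < p ^ a := pow_pos hp.pos _
  have : NeZero (p ^ a) := ⟨hq.ne'⟩
  let K := CyclotomicField (p ^ a) k
  have : NumberField K := IsCyclotomicExtension.numberField {p ^ a} k K
  have : IsGalois k K := IsCyclotomicExtension.isGalois {p ^ a} k K
  have hζ := IsCyclotomicExtension.zeta_spec (p ^ a) k K
  have : IsCyclic (ZMod (p ^ a))ˣ := ZMod.isCyclic_units_of_prime_pow p hp hp2 a
  have : IsCyclic Gal(K/k) := isCyclic_of_injective (hζ.autToPow k) (hζ.autToPow_injective k)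
  obtain ⟨P⟩ : Nonempty (Sylow p Gal(K/k)) := inferInstance
  obtain ⟨γ, hγ, hfix⟩ := exists_fixed hq hζ hε hloc hp P.toSubgroup P.isPGroup' inferInstance
  let F := IntermediateField.fixedField P.toSubgroup
  let γ' : F := ⟨γ, fun σ => hfix σ σ.2⟩
  have hγ' : γ' ^ (p ^ a) = algebraMap k F ε := by
    apply Subtype.ext
    exact hγ
  have h1 := congrArg (Algebra.norm k) hγ'
  rw [map_pow, Algebra.norm_algebraMap] at h1
  have hdeg : Module.finrank k F = P.toSubgroup.index := by
    have h2 := Module.finrank_mul_finrank k F K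
    have h3 : Module.finrank F K = Nat.card P.toSubgroup := IntermediateField.finrank_fixedField_eq_card _
    have h4 : Nat.card Gal(K/k) = Module.finrank k K := IsGalois.card_aut_eq_finrank k K
    have h5 := P.toSubgroup.index_mul_card
    have h6 : 0 < Nat.card P.toSubgroup := Nat.card_pos
    rw [h3, ← h4, ← h5] at h2
    exact Nat.eq_of_mul_eq_mul_right h6 h2
  have hcop : Nat.Coprime (p ^ a) (Module.finrank k F) := by
    rw [hdeg]
    apply Nat.Coprime.pow_left
    rw [hp.coprime_iff_not_dvd]
    exact P.not_dvd_index
  exact unit_ne_zero_pow (by simpa using hε) hcop h1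

lemma odd_pow {k : Type*} [Field k] [NumberField k] {m : ℕ} (hm : Odd m)
    {ε : 𝓞 k} (hε : ε ≠ 0) (hloc : ∀ q, q ∣ m → LocPow k q ε) : ∃ x : k, x ^ m = ε := by
  induction m using Nat.recOnPosPrimePosCoprime with
  | zero => simp at hm
  | one => exact ⟨ε, by simp⟩
  | prime_pow p n hp hn =>
    refine odd_primepow hp ?_ hε (hloc _ dvd_rfl)
    rintro rfl
    rw [Nat.odd_pow_iff hn.ne'] at hm
    exact absurd hm (by decide)
  | coprime a b ha hb hab iha ihb =>
    rw [Nat.odd_mul] at hm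
    exact pow_of_coprime (by simpa using hε) hab
      (iha hm.1 fun q hq => hloc q (hq.trans (dvd_mul_right _ _)))
      (ihb hm.2 fun q hq => hloc q (hq.trans (dvd_mul_left _ _)))

end Z4

open IsDedekindDomain NumberField

section Z5

lemma pgroup_units (r : ℕ) : IsPGroup 2 (ZMod (2 ^ r))ˣ := by
  rcases r with _ | r
  · apply IsPGroup.of_card (n := 0)
    simp [Nat.card_eq_fintype_card]
  · apply IsPGroup.of_card (n := r)
    rw [Nat.card_eq_fintype_card, ZMod.card_units_eq_totient, Nat.totient_prime_pow_succ Nat.prime_two]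
    simp

lemma ker_cyclic (s : ℕ) : IsCyclic (ZMod.unitsMap (show 4 ∣ 2 ^ (s + 2) from
    ⟨2 ^ s, by ring⟩)).ker := by
  set f := ZMod.unitsMap (show 4 ∣ 2 ^ (s + 2) from ⟨2 ^ s, by ring⟩) with hf
  have hsurj : Function.Surjective f := ZMod.unitsMap_surjective _
  have hcard : Nat.card f.ker = 2 ^ s := by
    have h1 := f.ker.index_mul_card
    rw [Subgroup.index_ker, MonoidHom.range_eq_top.2 hsurj, Subgroup.card_top,
      Nat.card_eq_fintype_card, ZMod.card_units_eq_totient, Nat.card_eq_fintype_card (α := (ZMod (2 ^ (s + 2)))ˣ),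
      ZMod.card_units_eq_totient, Nat.totient_prime_pow_succ Nat.prime_two] at h1
    have : Nat.totient 4 = 2 := by decide
    have h2 : (2 : ℕ) ^ (s + 1) = 2 * 2 ^ s := by ring
    rw [this] at h1
    generalize Nat.card f.ker = c at h1 ⊢
    omega
  have hcop : Nat.Coprime 5 (2 ^ (s + 2)) := Nat.Coprime.pow_right _ (by norm_num)
  let u : (ZMod (2 ^ (s + 2)))ˣ := ZMod.unitOfCoprime 5 hcop
  have hu : u ∈ f.ker := by
    rw [MonoidHom.mem_ker, Units.ext_iff, hf, ZMod.unitsMap_def, Units.coe_map]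
    simp only [u, ZMod.coe_unitOfCoprime, MonoidHom.coe_coe, map_natCast]
    decide
  have hord : orderOf u = 2 ^ s := by
    rw [← orderOf_units, ZMod.coe_unitOfCoprime, ← ZMod.orderOf_five s]
    norm_num
  apply isCyclic_of_orderOf_eq_card (⟨u, hu⟩ : f.ker)
  rw [Subgroup.orderOf_mk, hord, hcard]

lemma val_mod_four {s : ℕ} (x : (ZMod (2 ^ (s + 2)))ˣ) (hx : ZMod.unitsMap (show 4 ∣ 2 ^ (s + 2) from
    ⟨2 ^ s, by ring⟩) x ≠ 1) : (x : ZMod (2 ^ (s + 2))).val % 4 = 3 := by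
  set y := ZMod.unitsMap (show 4 ∣ 2 ^ (s + 2) from ⟨2 ^ s, by ring⟩) x with hy
  have h1 : (y : ZMod 4) = (((x : ZMod (2 ^ (s + 2))).val : ℕ) : ZMod 4) := by
    rw [hy, ZMod.unitsMap_val, ZMod.natCast_val]
  have h2 : ∀ y : (ZMod 4)ˣ, y ≠ 1 → (y : ZMod 4) = ((3 : ℕ) : ZMod 4) := by decide
  have h3 := h2 y hx
  rw [h1, ZMod.natCast_eq_natCast_iff'] at h3
  simpa using h3

lemma two_core {k M : Type*} [Field k] [NumberField k] [Field M] [NumberField M] [Algebra k M]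
    {r : ℕ} [IsCyclotomicExtension {2 ^ r} k M] {ε : 𝓞 k} (hε : ε ≠ 0)
    (hloc : LocPow k (2 ^ r) ε) (D : Subgroup Gal(M/k)) (hD : D ≠ ⊤ ∨ IsCyclic D) :
    ∃ γ : M, γ ^ (2 ^ r) = algebraMap k M ε ∧ ∀ σ ∈ D, σ γ = γ := by
  have hq : 0 < 2 ^ r := by positivity
  have : IsGalois k M := IsCyclotomicExtension.isGalois {2 ^ r} k M
  have hζ := IsCyclotomicExtension.zeta_spec (2 ^ r) k M
  set ζ := IsCyclotomicExtension.zeta (2 ^ r) k M with hζdef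
  have hinj := hζ.autToPow_injective k
  have hG : IsPGroup 2 Gal(M/k) := (pgroup_units r).of_injective _ hinj
  by_cases hcyc : IsCyclic D
  · exact exists_fixed hq hζ hε hloc Nat.prime_two D (hG.to_subgroup D) hcyc
  replace hD := hD.resolve_right hcyc
  obtain ⟨s, rfl⟩ : ∃ s, r = s + 2 := by
    by_contra! h
    apply hcyc
    have : IsCyclic (ZMod (2 ^ r))ˣ := (ZMod.isCyclic_units_two_pow_iff r).2 (by
      by_contra h2; exact h (r - 2) (by omega))
    exact isCyclic_of_injective ((hζ.autToPow k).comp D.subtype) (hinj.comp D.subtype_injective)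
  set χ := hζ.autToPow k with hχ
  have hcomm : ∀ a b : Gal(M/k), a * b = b * a := by
    intro a b; apply hinj; rw [map_mul, map_mul, mul_comm]
  set f := ZMod.unitsMap (show 4 ∣ 2 ^ (s + 2) from ⟨2 ^ s, by ring⟩) with hf
  set U := (f.comp χ).ker with hU
  have hUcyc : IsCyclic U := by
    have := ker_cyclic s
    let g : U →* f.ker := (χ.comp U.subtype).codRestrict f.ker (fun x => x.2)
    refine isCyclic_of_injective g ?_
    intro a b hab
    apply Subtype.ext
    apply hinj
    exact congrArg Subtype.val hab
  obtain ⟨β, hβ, hβfix⟩ := exists_fixed hq hζ hε hloc Nat.prime_two U (hG.to_subgroup U) hUcyc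
  by_cases hDU : D ≤ U
  · exact ⟨β, hβ, fun σ hσ => hβfix σ (hDU hσ)⟩
  obtain ⟨τ, hτD, hτU⟩ := SetLike.not_le_iff_exists.1 hDU
  have hidx : ∀ σ, σ ∉ U → σ * τ⁻¹ ∈ U := by
    intro σ hσ
    have : ∀ a b : (ZMod 4)ˣ, a ≠ 1 → b ≠ 1 → a * b⁻¹ = 1 := by decide
    rw [hU, MonoidHom.mem_ker, map_mul, map_inv]
    exact this _ _ hσ hτU
  obtain ⟨⟨u, huU⟩, hugen⟩ := hUcyc.exists_generator
  have hgen : ∀ σ ∈ U, ∃ n : ℤ, u ^ n = σ := by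
    intro σ hσ
    obtain ⟨n, hn⟩ := hugen ⟨σ, hσ⟩
    exact ⟨n, congrArg Subtype.val hn⟩
  have huD : u ∉ D := by
    intro hu
    apply hD
    rw [eq_top_iff]
    have hUD : U ≤ D := by
      intro σ hσ
      obtain ⟨n, rfl⟩ := hgen σ hσ
      exact D.zpow_mem hu n
    intro σ _
    by_cases hσ : σ ∈ U
    · exact hUD hσ
    · have := D.mul_mem (hUD (hidx σ hσ)) hτD
      simpa using this
  have hu1 : u ≠ 1 := by rintro rfl; exact huD D.one_mem
  have hU' : ∀ σ ∈ D, σ ∈ U → ∃ j : ℤ, (u * u) ^ j = σ := by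
    intro σ hσD hσU
    obtain ⟨n, hn⟩ := hgen σ hσU
    rcases Int.even_or_odd n with ⟨j, hj⟩ | hodd
    · refine ⟨j, ?_⟩
      rw [← hn, hj, ← pow_two, ← zpow_natCast, ← zpow_mul]
      congr 1; push_cast; ring
    · exfalso
      apply huD
      obtain ⟨a, ha⟩ := hG u
      have hc : IsCoprime n ((2 ^ a : ℕ) : ℤ) := by
        push_cast
        apply IsCoprime.pow_right
        obtain ⟨m, hm⟩ := hodd
        exact ⟨1, -m, by rw [hm]; ring⟩
      obtain ⟨x, y, hxy⟩ := hc
      have : u = σ ^ x := by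
        rw [← hn, ← zpow_mul]
        calc u = u ^ (1 : ℤ) := (zpow_one u).symm
          _ = u ^ (n * x) * (u ^ (2 ^ a)) ^ y := by
            rw [← zpow_natCast u, ← zpow_mul, ← zpow_add, ← hxy]; congr 1; ring
          _ = _ := by rw [ha, one_zpow, mul_one]
      rw [this]
      exact D.zpow_mem hσD x
  have hβ0 : β ≠ 0 := by
    rintro rfl
    rw [zero_pow hq.ne'] at hβ
    have := hβ.symm
    rw [map_eq_zero] at this
    exact hε (by simpa using this)
  -- the cocycle
  have hξq : (τ β / β) ^ (2 ^ (s + 2)) = 1 := by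
    rw [div_pow, ← map_pow, hβ, AlgEquiv.commutes, ← hβ, div_self (pow_ne_zero _ hβ0)]
  obtain ⟨c, -, hc⟩ := hζ.eq_pow_of_pow_eq_one hξq
  have huξ : u (τ β / β) = τ β / β := by
    have h1 : u (τ β) = τ (u β) := by
      have := congrArg (fun g : Gal(M/k) => g β) (hcomm u τ)
      exact this
    rw [map_div₀, h1, hβfix u huU]
  have hceven : Even c := by
    by_contra hodd
    rw [Nat.not_even_iff_odd] at hodd
    apply hu1
    apply hinj
    rw [map_one]
    have hcop : Nat.Coprime c (2 ^ (s + 2)) := Nat.Coprime.pow_right _ (Nat.coprime_two_right.2 hodd)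
    have hprim := hζ.pow_of_coprime c hcop
    have hz : u ζ = ζ := by
      obtain ⟨i, -, hi⟩ := hprim.eq_pow_of_pow_eq_one hζ.pow_eq_one
      rw [← hi, map_pow, hc, huξ]
    rw [← map_one χ]
    apply Units.ext
    apply ZMod.val_injective
    refine hζ.pow_inj (ZMod.val_lt _) (ZMod.val_lt _) ?_
    rw [hχ, hζ.autToPow_spec k, hζ.autToPow_spec k, hz]
    rfl
  obtain ⟨d, hd⟩ := hceven
  set θ := ζ ^ d with hθ
  have hθ2 : θ ^ 2 = τ β / β := by rw [hθ, ← pow_mul, ← hc, hd]; congr 1; ring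
  have hθq : θ ^ (2 ^ (s + 2)) = 1 := by rw [hθ, ← pow_mul, mul_comm, pow_mul, hζ.pow_eq_one, one_pow]
  have huuθ : u (u θ) = θ := by
    have h1 : (u θ) ^ 2 = θ ^ 2 := by rw [← map_pow, hθ2, huξ]
    rcases sq_eq_sq_iff_eq_or_eq_neg.1 h1 with h | h
    · rw [h, h]
    · rw [h, map_neg, h, neg_neg]
  have hg3 := val_mod_four (χ τ) hτU
  set g := (χ τ : ZMod (2 ^ (s + 2))).val with hg
  have hτζ : τ ζ = ζ ^ g := by rw [hg, hχ, hζ.autToPow_spec k]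
  obtain ⟨t, ht⟩ : ∃ t, g = 4 * t + 3 := ⟨g / 4, by omega⟩
  have hτθ : τ θ = θ ^ g := by rw [hθ, map_pow, hτζ, ← pow_mul, ← pow_mul, mul_comm]
  obtain ⟨n, hn⟩ : ∃ n : ℕ, 2 ^ (s + 2) ∣ n * (2 * t + 1) + 1 := by
    have hcop : Nat.Coprime (2 * t + 1) (2 ^ (s + 2)) :=
      Nat.Coprime.pow_right _ (Nat.coprime_two_right.2 ⟨t, rfl⟩)
    refine ⟨(-((2 * t + 1 : ℕ) : ZMod (2 ^ (s + 2)))⁻¹).val, ?_⟩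
    rw [← ZMod.natCast_eq_zero_iff]
    have := ZMod.coe_mul_inv_eq_one _ hcop
    rw [Nat.cast_add, Nat.cast_mul, ZMod.natCast_val, ZMod.cast_id, neg_mul, mul_comm, this]
    simp
  obtain ⟨m, hm⟩ := hn
  have hτη : τ (θ ^ n) * θ ^ 2 = θ ^ n := by
    rw [map_pow, hτθ, ← pow_mul, ← pow_add]
    have : g * n + 2 = n + 2 ^ (s + 2) * (2 * m) := by
      rw [ht]; linear_combination 2 * hm
    rw [this, pow_add, pow_mul, hθq, one_pow, mul_one]
  refine ⟨θ ^ n * β, ?_, ?_⟩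
  · rw [mul_pow, ← pow_mul, mul_comm n, pow_mul, hθq, one_pow, one_mul, hβ]
  · have hτγ : τ (θ ^ n * β) = θ ^ n * β := by
      rw [map_mul]
      have : τ β = θ ^ 2 * β := by rw [hθ2]; field_simp
      rw [this, ← mul_assoc, hτη]
    have hUγ : ∀ σ ∈ D, σ ∈ U → σ (θ ^ n * β) = θ ^ n * β := by
      intro σ hσD hσU
      obtain ⟨j, rfl⟩ := hU' σ hσD hσU
      have h1 : u * u ∈ MulAction.stabilizer Gal(M/k) (θ ^ n * β) := by
        rw [MulAction.mem_stabilizer_iff]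
        change u (u (θ ^ n * β)) = _
        rw [map_mul, map_mul, map_pow, map_pow, huuθ, hβfix u huU, hβfix u huU]
      exact (MulAction.stabilizer Gal(M/k) (θ ^ n * β)).zpow_mem h1 j
    intro σ hσ
    by_cases hσU : σ ∈ U
    · exact hUγ σ hσ hσU
    · have h1 := hUγ _ (D.mul_mem hσ (D.inv_mem hτD)) (hidx σ hσU)
      have h2 : σ = (σ * τ⁻¹) * τ := by simp
      rw [h2]
      change (σ * τ⁻¹) (τ _) = _
      rw [hτγ, h1]

end Z5

open IsDedekindDomain NumberField

section Z6
open scoped Pointwise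

lemma exists_inv_norm {k : Type*} [Field k] [NumberField k] (v : HeightOneSpectrum (𝓞 k)) :
    ∃ N : AlgebraicClosure (v.adicCompletion k) → ℝ, N 0 = 0 ∧ N 1 = 1 ∧ (∀ x, 0 ≤ N x) ∧
      (∀ x y, N (x * y) = N x * N y) ∧
      (∀ x y, N (x + y) ≤ max (N x) (N y)) ∧
      (∀ (s : Gal(AlgebraicClosure (v.adicCompletion k)/v.adicCompletion k)) x, N (s x) = N x) ∧
      (∀ a : 𝓞 k, N (algebraMap (v.adicCompletion k) _ (algebraMap k _ (a : k))) ≤ 1) ∧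
      (∀ a : 𝓞 k, N (algebraMap (v.adicCompletion k) _ (algebraMap k _ (a : k))) < 1 ↔ a ∈ v.asIdeal) := by
  let : NontriviallyNormedField (v.adicCompletion k) :=
    { (inferInstance : NormedField (v.adicCompletion k)) with
      non_trivial := by
        obtain ⟨x, hx, hx0⟩ := Submodule.exists_mem_ne_zero_of_ne_bot v.ne_bot
        refine ⟨(FinitePlace.embedding v (algebraMap (𝓞 k) k x))⁻¹, ?_⟩
        rw [norm_inv]
        refine (one_lt_inv₀ ?_).2 ((FinitePlace.norm_lt_one_iff_mem k v x).2 hx)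
        rw [norm_pos_iff]
        simpa using hx0 }
  have : IsUltrametricDist (v.adicCompletion k) := inferInstance
  have : CompleteSpace (v.adicCompletion k) := inferInstance
  let N := spectralMulAlgNorm (v.adicCompletion k) (AlgebraicClosure (v.adicCompletion k))
  have hext : ∀ x, N (algebraMap (v.adicCompletion k) _ x) = ‖x‖ := fun x => spectralNorm_extends x
  refine ⟨N, map_zero N, map_one N, fun x => apply_nonneg N x, fun x y => map_mul N x y, ?_, ?_, ?_, ?_⟩
  · exact isNonarchimedean_spectralNorm
  · intro s x
    exact (spectralNorm_eq_of_equiv s x).symm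
  · intro a
    rw [hext]
    exact FinitePlace.norm_le_one k v a
  · intro a
    rw [hext]
    exact FinitePlace.norm_lt_one_iff_mem k v a

lemma descent {k M E Ω : Type*} [Field k] [Field M] [Algebra k M] [Normal k M] [Field E]
    [CharZero E] [Algebra k E] [Field Ω] [Algebra E Ω] [IsGalois E Ω] [IsAlgClosed Ω]
    [Algebra k Ω] [IsScalarTower k E Ω] : ∃ (ι : M →ₐ[k] Ω) (φ : Gal(Ω/E) →* Gal(M/k)),
      (∀ s x, ι (φ s x) = s (ι x)) ∧ ∀ (q : ℕ) (a : k) (γ : M), γ ^ q = algebraMap k M a →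
        (∀ σ ∈ φ.range, σ γ = γ) → ∃ y : E, y ^ q = algebraMap k E a := by
  let ι : M →ₐ[k] Ω := IsAlgClosed.lift
  let : Algebra M Ω := ι.toRingHom.toAlgebra
  have : IsScalarTower k M Ω := IsScalarTower.of_algebraMap_eq (fun x => (ι.commutes x).symm)
  let φ : Gal(Ω/E) →* Gal(M/k) := (AlgEquiv.restrictNormalHom M).comp (AlgEquiv.restrictScalarsHom k)
  have hφ : ∀ s x, ι (φ s x) = s (ι x) := by
    intro s x
    exact AlgEquiv.restrictNormal_commutes (AlgEquiv.restrictScalars k s) M x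
  refine ⟨ι, φ, hφ, ?_⟩
  intro q a γ hγ hfix
  have h1 : ∀ s : Gal(Ω/E), s (ι γ) = ι γ := by
    intro s
    rw [← hφ, hfix _ ⟨s, rfl⟩]
  obtain ⟨y, hy⟩ := (InfiniteGalois.mem_range_algebraMap_iff_fixed (ι γ)).2 h1
  refine ⟨y, ?_⟩
  apply (algebraMap E Ω).injective
  rw [map_pow, hy, ← map_pow, hγ, AlgHom.commutes, IsScalarTower.algebraMap_apply k E Ω]


lemma exists_stable_prime {k M : Type*} [Field k] [NumberField k] [Field M] [NumberField M]
    [Algebra k M] (v : HeightOneSpectrum (𝓞 k))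
    (ι : M →ₐ[k] AlgebraicClosure (v.adicCompletion k))
    (φ : Gal(AlgebraicClosure (v.adicCompletion k)/v.adicCompletion k) →* Gal(M/k))
    (hφ : ∀ s x, ι (φ s x) = s (ι x)) :
    ∃ Q : Ideal (𝓞 M), Q.IsPrime ∧ Q.comap (algebraMap (𝓞 k) (𝓞 M)) = v.asIdeal ∧
      ∀ σ ∈ φ.range, ∀ x ∈ Q, σ • x ∈ Q := by
  obtain ⟨N, N0, N1, Nnn, Nmul, Nadd, Ninv, -, Nlt⟩ := exists_inv_norm v
  let val : Valuation (AlgebraicClosure (v.adicCompletion k)) NNReal :=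
    { toFun := fun x => ⟨N x, Nnn x⟩
      map_zero' := Subtype.ext N0
      map_one' := Subtype.ext N1
      map_mul' := fun x y => Subtype.ext (Nmul x y)
      map_add_le_max' := fun x y => by
        rcases le_max_iff.1 (Nadd x y) with h | h
        · exact le_max_of_le_left h
        · exact le_max_of_le_right h }
  have hle : ∀ x : 𝓞 M, val (ι x) ≤ 1 := by
    intro x
    have h1 : IsIntegral ℤ (ι x) := (RingOfIntegers.isIntegral_coe x).map (ι.restrictScalars ℤ)
    have h2 : IsIntegral val.integer (ι x) := h1.tower_top
    exact (Valuation.integer.integers val).mem_of_integral h2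
  have hlt : ∀ x, val x < 1 ↔ N x < 1 := fun x => Iff.rfl
  let Q : Ideal (𝓞 M) :=
    { carrier := {x | val (ι x) < 1}
      zero_mem' := by simp
      add_mem' := by
        intro a b ha hb
        simp only [Set.mem_ofPred_eq, map_add] at ha hb ⊢
        exact (val.map_add _ _).trans_lt (max_lt ha hb)
      smul_mem' := by
        intro c x hx
        simp only [Set.mem_ofPred_eq, smul_eq_mul, map_mul] at hx ⊢
        exact mul_lt_one_of_nonneg_of_lt_one_right (hle c) zero_le hx }
  have hmem : ∀ x, x ∈ Q ↔ val (ι x) < 1 := fun x => Iff.rfl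
  refine ⟨Q, ?_, ?_, ?_⟩
  · refine ⟨?_, ?_⟩
    · rw [Ne, Ideal.eq_top_iff_one, hmem]
      simp
    · intro x y hxy
      by_contra! h
      rw [hmem, hmem, not_lt, not_lt] at h
      rw [hmem] at hxy
      have h1 := le_antisymm (hle x) h.1
      have h2 := le_antisymm (hle y) h.2
      simp [h1, h2] at hxy
  · ext a
    rw [Ideal.mem_comap, hmem, hlt, ← Nlt a]
    have : ι ((algebraMap (𝓞 k) (𝓞 M) a : 𝓞 M) : M) =
        algebraMap (v.adicCompletion k) _ (algebraMap k _ (a : k)) := by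
      have h1 : ((algebraMap (𝓞 k) (𝓞 M) a : 𝓞 M) : M) = algebraMap k M (a : k) := rfl
      rw [h1, AlgHom.commutes]
      exact IsScalarTower.algebraMap_apply k (v.adicCompletion k) _ _
    rw [this]
  · rintro σ ⟨s, rfl⟩ x hx
    rw [hmem, hlt] at hx ⊢
    rw [coe_smul_gal, hφ, Ninv]
    exact hx

/-- the decomposition group is cyclic or not everything -/
lemma decomp_prop {k M : Type*} [Field k] [NumberField k] [Field M] [NumberField M]
    [Algebra k M] {r : ℕ} [IsCyclotomicExtension {2 ^ r} k M] (v : HeightOneSpectrum (𝓞 k))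
    (hv : ¬ ((2 : 𝓞 k) ∈ v.asIdeal ∧
            ¬ ∃ w₁ w₂ : HeightOneSpectrum (𝓞 M), w₁ ≠ w₂ ∧
                w₁.asIdeal.comap (algebraMap (𝓞 k) (𝓞 M)) = v.asIdeal ∧
                w₂.asIdeal.comap (algebraMap (𝓞 k) (𝓞 M)) = v.asIdeal))
    (D : Subgroup Gal(M/k)) (Q : Ideal (𝓞 M)) (hQ : Q.IsPrime)
    (hQv : Q.comap (algebraMap (𝓞 k) (𝓞 M)) = v.asIdeal)
    (hD : ∀ σ ∈ D, ∀ x ∈ Q, σ • x ∈ Q) : D ≠ ⊤ ∨ IsCyclic D := by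
  have : IsGalois k M := IsCyclotomicExtension.isGalois {2 ^ r} k M
  by_cases h2 : (2 : 𝓞 k) ∈ v.asIdeal
  · left
    rintro rfl
    have h3 : ∃ w₁ w₂ : HeightOneSpectrum (𝓞 M), w₁ ≠ w₂ ∧
                w₁.asIdeal.comap (algebraMap (𝓞 k) (𝓞 M)) = v.asIdeal ∧
                w₂.asIdeal.comap (algebraMap (𝓞 k) (𝓞 M)) = v.asIdeal := by
      by_contra h; exact hv ⟨h2, h⟩
    obtain ⟨w₁, w₂, hne, hw₁, hw₂⟩ := h3
    have key : ∀ w : HeightOneSpectrum (𝓞 M), w.asIdeal.comap (algebraMap (𝓞 k) (𝓞 M)) = v.asIdeal →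
        w.asIdeal = Q := by
      intro w hw
      obtain ⟨σ, hσ⟩ := Algebra.IsInvariant.exists_smul_of_under_eq (𝓞 k) (𝓞 M) Gal(M/k) Q w.asIdeal
        (hQv.trans hw.symm)
      have hwp := w.isPrime
      have hmax : Q.IsMaximal := hQ.isMaximal (by
        rintro rfl
        apply v.ne_bot
        rw [← hQv]
        exact Ideal.comap_bot_of_injective _ (FaithfulSMul.algebraMap_injective _ _))
      refine (hmax.eq_of_le w.isPrime.ne_top ?_).symm
      intro x hx
      rw [hσ]
      have h5 := hD σ⁻¹ (Subgroup.mem_top _) x hx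
      have h6 := Ideal.smul_mem_pointwise_smul σ _ Q h5
      simpa using h6
    exact hne (HeightOneSpectrum.ext ((key w₁ hw₁).trans (key w₂ hw₂).symm))
  · right
    have hq : 0 < 2 ^ r := by positivity
    have hζ := IsCyclotomicExtension.zeta_spec (2 ^ r) k M
    obtain ⟨z, hz, hzp⟩ := exists_int_prim hq hζ
    have hQ0 : Q ≠ ⊥ := by
        rintro rfl
        apply v.ne_bot
        rw [← hQv]
        exact Ideal.comap_bot_of_injective _ (FaithfulSMul.algebraMap_injective _ _)
    have hmax : Q.IsMaximal := hQ.isMaximal hQ0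
    let _ : Field (𝓞 M ⧸ Q) := Ideal.Quotient.field Q
    let _ : Field (𝓞 k ⧸ v.asIdeal) := Ideal.Quotient.field v.asIdeal
    have : Finite (𝓞 M ⧸ Q) := Ideal.finiteQuotientOfFreeOfNeBot Q hQ0
    have : Q.LiesOver v.asIdeal := ⟨hQv.symm⟩
    have hcyc : IsCyclic Gal((𝓞 M ⧸ Q)/(𝓞 k ⧸ v.asIdeal)) := inferInstance
    have hqQ : ((2 ^ r : ℕ) : 𝓞 M) ∉ Q := by
      intro h
      push_cast at h
      have h3 := hQ.mem_of_pow_mem _ h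
      apply h2
      rw [← hQv, Ideal.mem_comap, map_ofNat]
      exact h3
    have hstab : D ≤ MulAction.stabilizer Gal(M/k) Q := by
      intro σ hσ
      rw [MulAction.mem_stabilizer_iff]
      apply le_antisymm
      · intro x hx
        rw [Ideal.mem_pointwise_smul_iff_inv_smul_mem] at hx
        simpa using hD σ hσ _ hx
      · intro x hx
        rw [Ideal.mem_pointwise_smul_iff_inv_smul_mem]
        exact hD _ (D.inv_mem hσ) x hx
    have hinj : Function.Injective (Ideal.Quotient.stabilizerHom Q v.asIdeal Gal(M/k)) := by
      rw [injective_iff_map_eq_one]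
      intro σ hσ
      apply Subtype.ext
      apply hζ.autToPow_injective k
      apply Units.ext
      apply ZMod.val_injective
      refine hζ.pow_inj (ZMod.val_lt _) (ZMod.val_lt _) ?_
      rw [hζ.autToPow_spec k, hζ.autToPow_spec k]
      have h4 := congrArg (fun f => f (Ideal.Quotient.mk Q z)) hσ
      have h5 : Ideal.Quotient.mk Q ((σ : Gal(M/k)) • z) = Ideal.Quotient.mk Q z := h4
      rw [Ideal.Quotient.eq] at h5
      have h6 : ((σ : Gal(M/k)) • z) ^ (2 ^ r) - z ^ (2 ^ r) ∈ (⊥ : Ideal (𝓞 M)) := by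
        rw [← smul_pow', hzp.pow_eq_one, smul_one, sub_self]; exact Ideal.zero_mem _
      obtain ⟨η, hη, h7⟩ := exists_root_of_pow_eq hq hzp (⊥ : Ideal (𝓞 M)) h6
      rw [Ideal.mem_bot, sub_eq_zero] at h7
      have h8 : (η - 1) * z ∈ Q := by rw [sub_mul, one_mul, ← h7]; exact h5
      have h9 : z ∉ Q := by
        intro h
        have := Ideal.pow_mem_of_mem Q h _ hq
        rw [hzp.pow_eq_one] at this
        exact hQ.ne_top ((Ideal.eq_top_iff_one Q).2 this)
      have h10 := root_unity_eq_one Q hqQ hη ((hQ.mem_or_mem h8).resolve_right h9)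
      rw [h10, one_mul] at h7
      have h11 := congrArg (fun x : 𝓞 M => (x : M)) h7
      simp only [coe_smul_gal, hz] at h11
      exact h11
    exact isCyclic_of_injective ((Ideal.Quotient.stabilizerHom Q v.asIdeal Gal(M/k)).comp
      (Subgroup.inclusion hstab)) (hinj.comp (Subgroup.inclusion_injective hstab))

end Z6

open IsDedekindDomain NumberField

section Z7

lemma two_finite {k M : Type*} [Field k] [NumberField k] [Field M] [NumberField M]
    [Algebra k M] {r : ℕ} [IsCyclotomicExtension {2 ^ r} k M] {ε : 𝓞 k} (hε : ε ≠ 0)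
    (hloc : LocPow k (2 ^ r) ε) (v : HeightOneSpectrum (𝓞 k))
    (hv : ¬ ((2 : 𝓞 k) ∈ v.asIdeal ∧
            ¬ ∃ w₁ w₂ : HeightOneSpectrum (𝓞 M), w₁ ≠ w₂ ∧
                w₁.asIdeal.comap (algebraMap (𝓞 k) (𝓞 M)) = v.asIdeal ∧
                w₂.asIdeal.comap (algebraMap (𝓞 k) (𝓞 M)) = v.asIdeal)) :
    ∃ y : v.adicCompletion k, y ^ (2 ^ r) = algebraMap k _ (ε : k) := by
  have : IsGalois k M := IsCyclotomicExtension.isGalois {2 ^ r} k M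
  have : CharZero (v.adicCompletion k) := charZero_of_injective_algebraMap (algebraMap k _).injective
  obtain ⟨ι, φ, hφ, hdesc⟩ := descent (k := k) (M := M) (E := v.adicCompletion k)
    (Ω := AlgebraicClosure (v.adicCompletion k))
  obtain ⟨Q, hQ, hQv, hst⟩ := exists_stable_prime v ι φ hφ
  obtain ⟨γ, hγ, hfix⟩ := two_core hε hloc φ.range (decomp_prop (r := r) v hv φ.range Q hQ hQv hst)
  exact hdesc _ _ γ hγ hfix

lemma two_infinite {k M : Type*} [Field k] [NumberField k] [Field M] [NumberField M]
    [Algebra k M] {r : ℕ} [IsCyclotomicExtension {2 ^ r} k M] {ε : 𝓞 k} (hε : ε ≠ 0)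
    (hloc : LocPow k (2 ^ r) ε) (w : InfinitePlace k) :
    ∃ y : w.Completion, y ^ (2 ^ r) = algebraMap k _ (ε : k) := by
  have : IsGalois k M := IsCyclotomicExtension.isGalois {2 ^ r} k M
  rcases w.isReal_or_isComplex with hw | hw
  · let f := InfinitePlace.Completion.ringEquivRealOfIsReal hw
    let _ : Algebra k ℝ := (f.toRingHom.comp (algebraMap k w.Completion)).toAlgebra
    let _ : Algebra k ℂ := ((algebraMap ℝ ℂ).comp (algebraMap k ℝ)).toAlgebra
    have : IsScalarTower k ℝ ℂ := IsScalarTower.of_algebraMap_eq (fun _ => rfl)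
    have hquad : Algebra.IsQuadraticExtension ℝ ℂ := ⟨Complex.finrank_real_complex⟩
    have : IsGalois ℝ ℂ := { }
    obtain ⟨ι, φ, hφ, hdesc⟩ := descent (k := k) (M := M) (E := ℝ) (Ω := ℂ)
    have hcyc : IsCyclic Gal(ℂ/ℝ) := inferInstance
    have hcyc' : IsCyclic φ.range := isCyclic_of_surjective φ.rangeRestrict φ.rangeRestrict_surjective
    obtain ⟨γ, hγ, hfix⟩ := two_core hε hloc φ.range (Or.inr hcyc')
    obtain ⟨y, hy⟩ := hdesc _ _ γ hγ hfix
    refine ⟨f.symm y, ?_⟩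
    rw [← map_pow, hy]
    exact f.symm_apply_apply _
  · let f := InfinitePlace.Completion.ringEquivComplexOfIsComplex hw
    obtain ⟨y, hy⟩ := IsAlgClosed.exists_pow_nat_eq (f (algebraMap k w.Completion (ε : k)))
      (n := 2 ^ r) (by positivity)
    refine ⟨f.symm y, ?_⟩
    rw [← map_pow, hy]
    exact f.symm_apply_apply _

end Z7

theorem stmt_10 (k : Type*) [Field k] [NumberField k]
    (e r : ℕ) (hr : 2 ^ r ∣ e) (hr' : ¬ 2 ^ (r + 1) ∣ e)
    (M : Type*) [Field M] [Algebra k M] [NumberField M]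
    [IsCyclotomicExtension {(2 : ℕ) ^ r} k M]
    (ε : (𝓞 k)ˣ)
    (hε : {v : HeightOneSpectrum (𝓞 k) |
        ¬ ∃ y : v.adicCompletion k,
            y ^ e = algebraMap k (v.adicCompletion k) (algebraMap (𝓞 k) k (ε : 𝓞 k))}.Finite) :
    (∀ v : HeightOneSpectrum (𝓞 k),
        ¬ ((2 : 𝓞 k) ∈ v.asIdeal ∧
            ¬ ∃ w₁ w₂ : HeightOneSpectrum (𝓞 M), w₁ ≠ w₂ ∧
                w₁.asIdeal.comap (algebraMap (𝓞 k) (𝓞 M)) = v.asIdeal ∧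
                w₂.asIdeal.comap (algebraMap (𝓞 k) (𝓞 M)) = v.asIdeal) →
        ∃ y : v.adicCompletion k,
          y ^ e = algebraMap k (v.adicCompletion k) (algebraMap (𝓞 k) k (ε : 𝓞 k))) ∧
    (∀ w : InfinitePlace k, ∃ y : w.Completion,
        y ^ e = algebraMap k w.Completion (algebraMap (𝓞 k) k (ε : 𝓞 k))) := by
  have he : e ≠ 0 := by rintro rfl; simp at hr'
  have hε0 : (ε : 𝓞 k) ≠ 0 := ε.ne_zero
  have hloc : ∀ q, q ∣ e → LocPow k q (ε : 𝓞 k) := fun q hq => locPow_of_completion hq he _ hε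
  obtain ⟨m, rfl⟩ := hr
  have hm : Odd m := by
    rw [← Nat.not_even_iff_odd, even_iff_two_dvd]
    intro h
    apply hr'
    rw [pow_succ]
    exact Nat.mul_dvd_mul_left _ h
  obtain ⟨x, hx⟩ := odd_pow hm hε0 fun q hq => hloc q (hq.trans (dvd_mul_left _ _))
  have hcop : Nat.Coprime (2 ^ r) m := Nat.Coprime.pow_left _ (Nat.coprime_two_left.2 hm)
  have hεk : algebraMap (𝓞 k) k (ε : 𝓞 k) ≠ 0 := by
    rwa [Ne, FaithfulSMul.algebraMap_eq_zero_iff]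
  refine ⟨fun v hv => ?_, fun w => ?_⟩
  · refine pow_of_coprime ((map_ne_zero _).2 hεk) hcop
      (two_finite hε0 (hloc _ (dvd_mul_right _ _)) v hv) ⟨algebraMap k _ x, ?_⟩
    rw [← map_pow, hx]
  · refine pow_of_coprime ((map_ne_zero _).2 hεk) hcop
      (two_infinite (M := M) hε0 (hloc _ (dvd_mul_right _ _)) w) ⟨algebraMap k _ x, ?_⟩
    rw [← map_pow, hx]
end

section
/- For every odd prime p, 16 is an 8th power in the field ℚ_p of p-adic numbers; however, 16 is not an 8th power in ℚ. -/
open Polynomial in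
theorem aux_hensel (p : ℕ) [Fact p.Prime] (hp : p ≠ 2) (n : ℤ) (hn : (n : ZMod p) ≠ 0)
    (h : IsSquare (n : ZMod p)) : ∃ z : ℚ_[p], z ^ 2 = n := by
  obtain ⟨b, hb⟩ := h
  obtain ⟨a, rfl⟩ := ZMod.intCast_surjective b
  have hp' := (Fact.out : p.Prime)
  have ha : (a : ZMod p) ≠ 0 := by
    rintro h0
    apply hn
    rw [hb, h0, mul_zero]
  have h2 : ((2 : ℤ) : ZMod p) ≠ 0 := by
    intro h0
    rw [ZMod.intCast_zmod_eq_zero_iff_dvd] at h0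
    have : p ∣ 2 := by exact_mod_cast h0
    exact hp ((Nat.prime_dvd_prime_iff_eq hp' Nat.prime_two).1 this)
  have h2a : ¬ ((p : ℤ) ∣ 2 * a) := by
    rw [← ZMod.intCast_zmod_eq_zero_iff_dvd]
    push_cast at h2 ⊢
    exact mul_ne_zero h2 ha
  have hd : (p : ℤ) ∣ a ^ 2 - n := by
    rw [← ZMod.intCast_zmod_eq_zero_iff_dvd]
    push_cast
    rw [hb]; ring
  have e1 : ‖((2 * a : ℤ) : ℤ_[p])‖ = 1 := by
    refine le_antisymm (PadicInt.norm_le_one _) (not_lt.1 ?_)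
    rw [PadicInt.norm_int_lt_one_iff_dvd]
    exact h2a
  have e2 : ‖((a ^ 2 - n : ℤ) : ℤ_[p])‖ < 1 := by
    rw [PadicInt.norm_int_lt_one_iff_dvd]
    exact hd
  obtain ⟨z, hz, -⟩ := hensels_lemma (p := p) (R := ℤ_[p]) (F := X ^ 2 - C (n : ℤ_[p])) (a := (a : ℤ_[p]))
    (by
      push_cast at e1 e2
      rw [norm_mul] at e1
      simpa [one_add_one_eq_two, e1] using e2)
  refine ⟨z, ?_⟩
  have hz' : z ^ 2 = (n : ℤ_[p]) := by
    simpa [sub_eq_zero] using hz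
  exact_mod_cast congrArg (fun t : ℤ_[p] => (t : ℚ_[p])) hz'

/-- For every odd prime `p`, `16` is an 8th power in the field `ℚ_p` of
`p`-adic numbers; however, `16` is not an 8th power in `ℚ`. -/
theorem stmt_14 :
    (∀ (p : ℕ) [Fact p.Prime], p ≠ 2 → ∃ y : ℚ_[p], y ^ 8 = 16) ∧
    ¬ ∃ y : ℚ, y ^ 8 = 16 := by
  refine ⟨?_, ?_⟩
  · intro p _ hp
    have hp' := (Fact.out : p.Prime)
    have h2 : (2 : ZMod p) ≠ 0 := by
      intro h0
      have : ((2 : ℕ) : ZMod p) = 0 := by exact_mod_cast h0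
      rw [ZMod.natCast_eq_zero_iff] at this
      exact hp ((Nat.prime_dvd_prime_iff_eq hp' Nat.prime_two).1 this)
    have ho : p % 2 = 1 := hp'.eq_two_or_odd.resolve_left hp
    by_cases h1 : p % 4 = 3
    · by_cases h7 : p % 8 = 7
      · obtain ⟨z, hz⟩ := aux_hensel p hp 2 (by exact_mod_cast h2)
          (by exact_mod_cast (ZMod.exists_sq_eq_two_iff hp).2 (Or.inr h7))
        refine ⟨z, ?_⟩
        rw [show z ^ 8 = (z ^ 2) ^ 4 by ring, hz]; norm_num
      · obtain ⟨z, hz⟩ := aux_hensel p hp (-2) (by push_cast; exact neg_ne_zero.2 h2)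
          (by push_cast; exact (ZMod.exists_sq_eq_neg_two_iff hp).2 (by omega))
        refine ⟨z, ?_⟩
        rw [show z ^ 8 = (z ^ 2) ^ 4 by ring, hz]; norm_num
    · obtain ⟨z, hz⟩ := aux_hensel p hp (-1) (by push_cast; exact neg_ne_zero.2 one_ne_zero)
        (by push_cast; exact ZMod.exists_sq_eq_neg_one_iff.2 h1)
      refine ⟨1 + z, ?_⟩
      push_cast at hz
      rw [show (1 + z) ^ 8 = (1 + 2 * z + z ^ 2) ^ 4 by ring, hz,
        show (1 + 2 * z + -1) ^ 4 = 16 * (z ^ 2) ^ 2 by ring, hz]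
      norm_num
  · rintro ⟨y, hy⟩
    have h : (y ^ 2 - 2) * ((y ^ 2 + 2) * (y ^ 4 + 4)) = 0 := by linear_combination hy
    have h' : y ^ 2 - 2 = 0 := (mul_eq_zero.1 h).resolve_right (by positivity)
    have : IsSquare (2 : ℚ) := ⟨y, by linarith⟩
    revert this
    rw [Rat.isSquare_iff]
    rintro ⟨⟨k, hk⟩, -⟩
    have hk : (2 : ℤ) = k * k := hk
    have : k < 2 := by nlinarith
    have : -2 < k := by nlinarith
    interval_cases k <;> omega
end
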